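/- Let d ≥ 2. There exist constants c′, C′ > 0 such that for all sufficiently large N, c′ · N^{−1/2 − 1/(2d)} ≤ D_{L2,C}(S^d; N) ≤ C′ · N^{−1/2 − 1/(2d)}, where D_{L2,C}(S^d; N) is the optimal (infimal) spherical cap L2-discrepancy over all N-point configurations on S^d. -/

import Mathlib

open MeasureTheory Metric Real Filter
open scoped BigOperators ENNReal NNReal RealInnerProductSpace Topology

noncomputable section

/-- Normalized uniform (surface) probability measure `σ_d` on the unit sphere
`S^d ⊂ ℝ^{d+1}`, defined as normalized `d`-dimensional Hausdorff measure. -/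
def sigmaMeasure (d : ℕ) : Measure (EuclideanSpace ℝ (Fin (d + 1))) :=
  (μH[(d : ℝ)] (sphere (0 : EuclideanSpace ℝ (Fin (d + 1))) 1))⁻¹ •
    μH[(d : ℝ)].restrict (sphere (0 : EuclideanSpace ℝ (Fin (d + 1))) 1)

/-- Squared spherical cap `L²` discrepancy of the `N`-point configuration `x` on `S^d`:
`∫_{-1}^{1} ∫_{S^d} |#{k : x_k ∈ C(y;t)}/N − σ_d(C(y;t))|² dσ_d(y) dt`. -/
def L2DiscSq (d N : ℕ) (x : Fin N → EuclideanSpace ℝ (Fin (d + 1))) : ℝ :=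
  ∫ t in Set.Icc (-1 : ℝ) 1, ∫ y,
    ((Nat.card {k : Fin N // t ≤ ⟪y, x k⟫} : ℝ) / N
      - (sigmaMeasure d {z | t ≤ ⟪y, z⟫}).toReal) ^ 2 ∂ sigmaMeasure d

/-- Spherical cap `L²` discrepancy. -/
def L2Disc (d N : ℕ) (x : Fin N → EuclideanSpace ℝ (Fin (d + 1))) : ℝ :=
  Real.sqrt (L2DiscSq d N x)

/-- Optimal (infimal) spherical cap `L²`-discrepancy over all `N`-point configurations
on `S^d`. -/
def optL2Disc (d N : ℕ) : ℝ :=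
  ⨅ x : {x : Fin N → EuclideanSpace ℝ (Fin (d + 1)) //
    ∀ k, x k ∈ sphere (0 : EuclideanSpace ℝ (Fin (d + 1))) 1}, L2Disc d N x.1

/-! By Stolarsky's invariance principle the squared discrepancy of a configuration is a constant
times its energy gap: the mean distance between two independent points of the uniform distribution
`σ` minus the mean distance between two independent points of the configuration.

For the lower bound, a distance is a positive mixture of the kernels `1 - exp(-τ² r²)`. Gaussian
kernels are positive definite, so every scale `τ` contributes nonnegatively to the gap. At the
scales `τ` beyond a multiple of `N^{1/d}` the Gaussian energy of `σ`, of order `τ^{-d}`, is at most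
half of the diagonal term `1/N` in the energy of the configuration, and integrating `τ^{-2}/N` over
these scales gives a gap of order `N^{-1-1/d}`.

For the upper bound, `σ` is cut along quantiles of successive coordinates of a chart with Lipschitz
inverse into `N` parts of equal mass and mean diameter of order `N^{-1/d}`. Choosing one random
point in each part independently, only the diagonal terms of the expected energy differ from those
of `σ`, which makes the expected gap of order `N^{-1-1/d}`.
-/
/-! ## Uniform measures on spheres and radial energies -/

/-- The uniform distribution on the unit sphere of `V`, encoded as a rotation-invariant probability
measure on `V` concentrated on the sphere. -/
class IsUniformOnSphere {V : Type*} [NormedAddCommGroup V] [InnerProductSpace ℝ V]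
    [MeasurableSpace V] (σ : Measure V) : Prop extends IsProbabilityMeasure σ where
  ae_norm_eq_one : ∀ᵐ x ∂σ, ‖x‖ = 1
  measurePreserving : ∀ L : V ≃ₗᵢ[ℝ] V, MeasurePreserving L σ σ

/-- The energy `∬ F(|x - y|) dμ(x) dμ(y)` of the measure `μ` for the radial kernel with
profile `F`; for `F = id` it is the mean distance between two independent `μ`-random points. -/
def radialEnergy {X : Type*} [PseudoMetricSpace X] [MeasurableSpace X] (F : ℝ → ℝ)
    (μ : Measure X) : ℝ :=
  ∫ p, F (dist p.1 p.2) ∂μ.prod μ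

section Sphere

lemma dist_le_two_of_norm_eq_one {E : Type*} [SeminormedAddCommGroup E] {x y : E} (hx : ‖x‖ = 1)
    (hy : ‖y‖ = 1) : dist x y ≤ 2 := by
  linarith [dist_le_norm_add_norm x y]

lemma ae_prod_norm_eq_one {E : Type*} [Norm E] [MeasurableSpace E] {μ ν : Measure E} [SFinite ν]
    (hμ : ∀ᵐ x ∂μ, ‖x‖ = 1) (hν : ∀ᵐ x ∂ν, ‖x‖ = 1) :
    ∀ᵐ p ∂μ.prod ν, ‖p.1‖ = 1 ∧ ‖p.2‖ = 1 :=
  (Measure.quasiMeasurePreserving_fst.ae hμ).and (Measure.quasiMeasurePreserving_snd.ae hν)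

variable {V : Type*} [NormedAddCommGroup V] [InnerProductSpace ℝ V]

lemma exists_isometry_apply_eq [FiniteDimensional ℝ V] {x y : V} (h : ‖x‖ = ‖y‖) :
    ∃ L : V ≃ₗᵢ[ℝ] V, L x = y :=
  ⟨_, Submodule.reflection_sub h⟩

variable [MeasurableSpace V] {σ μ ν : Measure V} {F : ℝ → ℝ}

lemma integrable_of_abs_le_on_sphere [IsUniformOnSphere σ] {f : V → ℝ} (hf : Measurable f) {C : ℝ}
    (hC : ∀ x, ‖x‖ = 1 → |f x| ≤ C) : Integrable f σ :=
  .of_bound hf.aestronglyMeasurable C (IsUniformOnSphere.ae_norm_eq_one.mono hC)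

variable [BorelSpace V]

lemma integral_comp_isometry [IsUniformOnSphere σ] (L : V ≃ₗᵢ[ℝ] V) (G : V → ℝ) :
    ∫ z, G (L z) ∂σ = ∫ z, G z ∂σ :=
  (IsUniformOnSphere.measurePreserving L).integral_comp L.toHomeomorph.measurableEmbedding G

variable [FiniteDimensional ℝ V]

lemma integral_dist_eq_of_norm_eq [IsUniformOnSphere σ] (F : ℝ → ℝ) {x y : V}
    (h : ‖x‖ = ‖y‖) : ∫ z, F (dist x z) ∂σ = ∫ z, F (dist y z) ∂σ := by
  obtain ⟨L, rfl⟩ := exists_isometry_apply_eq h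
  rw [← integral_comp_isometry L fun z ↦ F (dist (L x) z)]
  simp only [LinearIsometryEquiv.dist_map]

lemma integrable_radial [IsFiniteMeasure μ] [IsFiniteMeasure ν]
    (hF : Continuous F) (hμ : ∀ᵐ x ∂μ, ‖x‖ = 1) (hν : ∀ᵐ x ∂ν, ‖x‖ = 1) :
    Integrable (fun p : V × V ↦ F (dist p.1 p.2)) (μ.prod ν) := by
  obtain ⟨C, hC⟩ := (isCompact_Icc (a := (0 : ℝ)) (b := 2)).exists_bound_of_continuousOn
    hF.continuousOn
  refine .of_bound (by fun_prop) C ?_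
  filter_upwards [ae_prod_norm_eq_one hμ hν] with p hp
  exact hC _ ⟨dist_nonneg, dist_le_two_of_norm_eq_one hp.1 hp.2⟩

lemma radialEnergy_sub_mul [IsProbabilityMeasure μ] (hF : Continuous F)
    (hμ : ∀ᵐ x ∂μ, ‖x‖ = 1) (a b : ℝ) :
    radialEnergy (fun r ↦ a - b * F r) μ = a - b * radialEnergy F μ := by
  rw [radialEnergy, integral_sub (integrable_const _) ((integrable_radial hF hμ hμ).const_mul b),
    integral_const_mul, radialEnergy]
  simp

lemma integral_radial_eq_radialEnergy [IsUniformOnSphere σ]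
    [IsProbabilityMeasure μ] (hF : Continuous F) (hμ : ∀ᵐ x ∂μ, ‖x‖ = 1) :
    ∫ p, F (dist p.1 p.2) ∂μ.prod σ = radialEnergy F σ := by
  have hσ : ∀ᵐ x ∂σ, ‖x‖ = 1 := IsUniformOnSphere.ae_norm_eq_one
  obtain ⟨x₀, hx₀⟩ := hμ.exists
  have hconst : ∀ x, ‖x‖ = 1 → ∫ z, F (dist x z) ∂σ = ∫ z, F (dist x₀ z) ∂σ := fun x hx ↦
    integral_dist_eq_of_norm_eq F (hx.trans hx₀.symm)
  rw [radialEnergy, integral_prod _ (integrable_radial hF hμ hσ),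
    integral_prod _ (integrable_radial hF hσ hσ), integral_congr_ae (hμ.mono hconst),
    integral_congr_ae (hσ.mono hconst)]
  simp

end Sphere

/-! ## Factorized kernels -/

/-- The radial kernel with profile `F` is a Gram kernel on the unit sphere:
`F(|x - y|) = ∫ φ(x, z) φ(y, z) dρ(z)`, with `φ(x, ·)` dominated in `L²(ρ)` uniformly in `x`. -/
structure IsGramFactorization {V Z : Type*} [NormedAddCommGroup V] [MeasurableSpace V]
    [MeasurableSpace Z] (F : ℝ → ℝ) (φ : V → Z → ℝ)
    (ρ : Measure Z) : Prop where
  measurable : Measurable (Function.uncurry φ)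
  exists_bound : ∃ h : Z → ℝ, Integrable (fun z ↦ h z ^ 2) ρ ∧ ∀ x, ‖x‖ = 1 → ∀ z, |φ x z| ≤ h z
  integral_mul : ∀ x y, ‖x‖ = 1 → ‖y‖ = 1 → ∫ z, φ x z * φ y z ∂ρ = F (dist x y)

namespace IsGramFactorization

variable {V Z : Type*} [NormedAddCommGroup V] [MeasurableSpace V] [MeasurableSpace Z]
  {F : ℝ → ℝ} {φ : V → Z → ℝ} {ρ : Measure Z} {μ ν : Measure V}
  [IsProbabilityMeasure μ] [IsProbabilityMeasure ν]

lemma integrable_mul (h : IsGramFactorization F φ ρ) (hμ : ∀ᵐ x ∂μ, ‖x‖ = 1)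
    (hν : ∀ᵐ x ∂ν, ‖x‖ = 1) :
    Integrable (fun z ↦ (∫ x, φ x z ∂μ) * ∫ y, φ y z ∂ν) ρ := by
  obtain ⟨b, hb, hφb⟩ := h.exists_bound
  have hmeas : ∀ (μ : Measure V) [IsProbabilityMeasure μ],
      AEStronglyMeasurable (fun z ↦ ∫ x, φ x z ∂μ) ρ := fun μ _ ↦
    h.measurable.stronglyMeasurable.integral_prod_left.aestronglyMeasurable
  have hbound : ∀ (μ : Measure V) [IsProbabilityMeasure μ], (∀ᵐ x ∂μ, ‖x‖ = 1) →
      ∀ z, |∫ x, φ x z ∂μ| ≤ b z := fun μ _ hμ z ↦ by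
    simpa using norm_integral_le_of_norm_le_const (f := fun x ↦ φ x z) (C := b z)
      (hμ.mono fun x hx ↦ hφb x hx z)
  refine hb.mono' ((hmeas μ).mul (hmeas ν)) (.of_forall fun z ↦ ?_)
  rw [norm_mul, sq]
  have := hbound μ hμ z
  gcongr
  exacts [(abs_nonneg _).trans this, this, hbound ν hν z]

lemma integral_integral_mul [SFinite ρ] (h : IsGramFactorization F φ ρ) (hμ : ∀ᵐ x ∂μ, ‖x‖ = 1)
    (hν : ∀ᵐ x ∂ν, ‖x‖ = 1) :
    ∫ z, (∫ x, φ x z ∂μ) * (∫ y, φ y z ∂ν) ∂ρ = ∫ p, F (dist p.1 p.2) ∂μ.prod ν := by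
  obtain ⟨b, hb, hφb⟩ := h.exists_bound
  have hsphere := ae_prod_norm_eq_one hμ hν
  have hint : Integrable (fun q : Z × V × V ↦ φ q.2.1 q.1 * φ q.2.2 q.1)
      (ρ.prod (μ.prod ν)) := by
    refine (hb.comp_fst (μ.prod ν)).mono' (Measurable.aestronglyMeasurable ?_) ?_
    · exact (h.measurable.comp (by fun_prop : Measurable fun q : Z × V × V ↦ (q.2.1, q.1))).mul
        (h.measurable.comp (by fun_prop : Measurable fun q : Z × V × V ↦ (q.2.2, q.1)))
    · filter_upwards [Measure.quasiMeasurePreserving_snd.ae hsphere] with q hq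
      rw [norm_mul, sq]
      have := hφb q.2.1 hq.1 q.1
      gcongr
      exacts [(abs_nonneg _).trans this, this, hφb q.2.2 hq.2 q.1]
  calc ∫ z, (∫ x, φ x z ∂μ) * (∫ y, φ y z ∂ν) ∂ρ
      = ∫ z, ∫ p, φ p.1 z * φ p.2 z ∂μ.prod ν ∂ρ := by simp only [← integral_prod_mul]
    _ = ∫ p, ∫ z, φ p.1 z * φ p.2 z ∂ρ ∂μ.prod ν := integral_integral_swap hint
    _ = ∫ p, F (dist p.1 p.2) ∂μ.prod ν :=
        integral_congr_ae (hsphere.mono fun p hp ↦ h.integral_mul _ _ hp.1 hp.2)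

lemma integrable_sq_sub (h : IsGramFactorization F φ ρ) (hμ : ∀ᵐ x ∂μ, ‖x‖ = 1)
    (hν : ∀ᵐ x ∂ν, ‖x‖ = 1) :
    Integrable (fun z ↦ ((∫ x, φ x z ∂μ) - ∫ x, φ x z ∂ν) ^ 2) ρ := by
  refine (((h.integrable_mul hμ hμ).sub ((h.integrable_mul hμ hν).const_mul 2)).add
    (h.integrable_mul hν hν)).congr (.of_forall fun z ↦ ?_)
  simp only [Pi.add_apply, Pi.sub_apply]
  ring

-- The cross term is the energy of `σ` too, because the potential of `σ` is constant on the sphere.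
lemma integral_sq_sub [InnerProductSpace ℝ V] [FiniteDimensional ℝ V] [BorelSpace V]
    {σ : Measure V} [IsUniformOnSphere σ] [SFinite ρ] (h : IsGramFactorization F φ ρ)
    (hF : Continuous F) (hμ : ∀ᵐ x ∂μ, ‖x‖ = 1) :
    ∫ z, ((∫ x, φ x z ∂μ) - ∫ x, φ x z ∂σ) ^ 2 ∂ρ = radialEnergy F μ - radialEnergy F σ := by
  have hσ : ∀ᵐ x ∂σ, ‖x‖ = 1 := IsUniformOnSphere.ae_norm_eq_one
  have hexpand : ∀ z, ((∫ x, φ x z ∂μ) - ∫ x, φ x z ∂σ) ^ 2 =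
      (∫ x, φ x z ∂μ) * (∫ x, φ x z ∂μ) - 2 * ((∫ x, φ x z ∂μ) * ∫ x, φ x z ∂σ) +
        (∫ x, φ x z ∂σ) * ∫ x, φ x z ∂σ := fun z ↦ by ring
  simp only [hexpand]
  rw [integral_add, integral_sub, integral_const_mul, h.integral_integral_mul hμ hμ,
    h.integral_integral_mul hμ hσ, h.integral_integral_mul hσ hσ,
    integral_radial_eq_radialEnergy (σ := σ) hF hμ, radialEnergy, radialEnergy]
  · ring
  · exact h.integrable_mul hμ hμ
  · exact (h.integrable_mul hμ hσ).const_mul 2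
  · exact (h.integrable_mul hμ hμ).sub ((h.integrable_mul hμ hσ).const_mul 2)
  · exact h.integrable_mul hσ hσ

end IsGramFactorization

/-! ## Stolarsky's invariance principle -/

/-- The proportionality constant in Stolarsky's invariance principle: half of the mean of
`|⟪x, y⟫|` over two independent `σ`-random points. -/
def stolarskyConst {V : Type*} [NormedAddCommGroup V] [InnerProductSpace ℝ V] [MeasurableSpace V]
    (σ : Measure V) : ℝ :=
  (∫ x, ∫ y, |⟪y, x⟫| ∂σ ∂σ) / 2

/-- The indicator of the relation `x ∈ C(y; t)`, as a function of `x` and of the cap `(t, y)`. -/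
def capIndicator {V : Type*} [NormedAddCommGroup V] [InnerProductSpace ℝ V] (x : V)
    (c : ℝ × V) : ℝ :=
  (Set.Iic ⟪c.2, x⟫).indicator 1 c.1

section Stolarsky

lemma setIntegral_Icc_indicator_Iic_mul {a b : ℝ} (ha : |a| ≤ 1) (hb : |b| ≤ 1) :
    ∫ t in Set.Icc (-1) 1, (Set.Iic a).indicator 1 t * (Set.Iic b).indicator (1 : ℝ → ℝ) t =
      1 + (a + b) / 2 - |a - b| / 2 := by
  have hmin : -1 ≤ min a b := le_min (abs_le.1 ha).1 (abs_le.1 hb).1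
  have hinter : Set.Iic (min a b) ∩ Set.Icc (-1) 1 = Set.Icc (-1) (min a b) := by
    rw [Set.inter_comm, ← Set.Ici_inter_Iic, Set.inter_assoc, Set.Iic_inter_Iic,
      min_eq_right ((min_le_left a b).trans (abs_le.1 ha).2), Set.Ici_inter_Iic]
  calc ∫ t in Set.Icc (-1) 1, (Set.Iic a).indicator 1 t * (Set.Iic b).indicator (1 : ℝ → ℝ) t
      = ∫ t in Set.Icc (-1) 1, (Set.Iic (min a b)).indicator (1 : ℝ → ℝ) t := by
        rw [← Set.Iic_inter_Iic, Set.inter_indicator_one]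
        rfl
    _ = min a b + 1 := by
        rw [integral_indicator_one measurableSet_Iic, measureReal_restrict_apply measurableSet_Iic,
          hinter, volume_real_Icc_of_le hmin, sub_neg_eq_add]
    _ = 1 + (a + b) / 2 - |a - b| / 2 := by
        linarith [max_sub_min_eq_abs' a b, max_add_min a b]

variable {V : Type*} [NormedAddCommGroup V] [InnerProductSpace ℝ V]

lemma abs_inner_le_norm_of_norm_eq_one {y : V} (hy : ‖y‖ = 1) (v : V) : |⟪y, v⟫| ≤ ‖v‖ := by
  simpa [hy] using abs_real_inner_le_norm y v

variable [MeasurableSpace V] [BorelSpace V]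

lemma integral_capIndicator (μ : Measure V) (t : ℝ) (y : V) :
    ∫ x, capIndicator x (t, y) ∂μ = μ.real {z | t ≤ ⟪y, z⟫} :=
  integral_indicator_one (measurableSet_le measurable_const (by fun_prop))

lemma integral_inner_eq_zero {σ : Measure V} [IsUniformOnSphere σ] (v : V) :
    ∫ y, ⟪y, v⟫ ∂σ = 0 := by
  have h := integral_comp_isometry (σ := σ) (LinearIsometryEquiv.neg ℝ) fun y ↦ ⟪y, v⟫
  simp only [LinearIsometryEquiv.coe_neg, inner_neg_left, integral_neg] at h
  linarith

variable [FiniteDimensional ℝ V]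

lemma measurable_uncurry_capIndicator :
    Measurable (Function.uncurry (capIndicator : V → ℝ × V → ℝ)) := by
  have hset : MeasurableSet {p : V × ℝ × V | p.2.1 ≤ ⟪p.2.2, p.1⟫} :=
    measurableSet_le (by fun_prop) (by fun_prop)
  exact measurable_one.indicator hset

variable {σ : Measure V} [IsUniformOnSphere σ]

lemma integral_abs_inner (v : V) : ∫ y, |⟪y, v⟫| ∂σ = 2 * stolarskyConst σ * ‖v‖ := by
  have hscale : ∀ x : V, ‖x‖ = 1 → (∫ y, |⟪y, x⟫| ∂σ) * ‖v‖ = ∫ y, |⟪y, v⟫| ∂σ := fun x hx ↦ by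
    obtain ⟨L, hL⟩ := exists_isometry_apply_eq (x := v) (y := ‖v‖ • x) (by simp [norm_smul, hx])
    rw [← integral_mul_const, ← integral_comp_isometry L fun y ↦ |⟪y, x⟫| * ‖v‖]
    congr with y
    rw [← LinearIsometryEquiv.inner_map_map L y v, hL, inner_smul_right, abs_mul, abs_norm,
      mul_comm]
  rw [stolarskyConst, mul_div_cancel₀ _ two_ne_zero, ← integral_mul_const,
    integral_congr_ae (IsUniformOnSphere.ae_norm_eq_one.mono hscale)]
  simp

lemma stolarskyConst_pos : 0 < stolarskyConst σ := by
  let b := stdOrthonormalBasis ℝ V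
  have hint : ∀ i, Integrable (fun y ↦ |⟪y, b i⟫|) σ := fun i ↦
    integrable_of_abs_le_on_sphere (by fun_prop) fun y hy ↦
      (abs_abs _).trans_le (abs_inner_le_norm_of_norm_eq_one hy _)
  have hpointwise : ∀ y : V, ‖y‖ = 1 → 1 ≤ ∑ i, |⟪y, b i⟫| := fun y hy ↦
    calc (1 : ℝ) = ∑ i, ⟪y, b i⟫ ^ 2 := by rw [b.sum_sq_inner_left, hy, one_pow]
      _ ≤ ∑ i, |⟪y, b i⟫| := Finset.sum_le_sum fun i _ ↦ by
        have := abs_inner_le_norm_of_norm_eq_one hy (b i)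
        rw [b.norm_eq_one] at this
        rw [← sq_abs, sq]
        exact mul_le_of_le_one_left (abs_nonneg _) this
  have hone : 1 ≤ ∑ i, ∫ y, |⟪y, b i⟫| ∂σ := by
    rw [← integral_finsetSum _ fun i _ ↦ hint i]
    simpa using integral_mono_ae (integrable_const 1) (integrable_finsetSum _ fun i _ ↦ hint i)
      (IsUniformOnSphere.ae_norm_eq_one.mono hpointwise)
  simp only [integral_abs_inner, b.norm_eq_one, Finset.sum_const, nsmul_eq_mul] at hone
  by_contra! hle
  have : (0 : ℝ) ≤ (Finset.univ : Finset (Fin (Module.finrank ℝ V))).card := Nat.cast_nonneg _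
  nlinarith

lemma integral_capIndicator_mul {x y : V} (hx : ‖x‖ = 1) (hy : ‖y‖ = 1) :
    ∫ c, capIndicator x c * capIndicator y c ∂(volume.restrict (Set.Icc (-1) 1)).prod σ =
      1 - stolarskyConst σ * dist x y := by
  have hint : Integrable (fun c ↦ capIndicator x c * capIndicator y c)
      ((volume.restrict (Set.Icc (-1) 1)).prod σ) := by
    refine .of_bound (Measurable.aestronglyMeasurable ?_) 1 (.of_forall fun c ↦ ?_)
    · exact (measurable_uncurry_capIndicator.comp measurable_prodMk_left).mul
        (measurable_uncurry_capIndicator.comp measurable_prodMk_left)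
    · simp only [capIndicator, Set.indicator_apply, Pi.one_apply]
      split_ifs <;> simp
  have hinner : ∀ z : V, ‖z‖ = 1 → ∫ t in Set.Icc (-1) 1, capIndicator x (t, z) *
      capIndicator y (t, z) = 1 + ⟪z, x + y⟫ / 2 - |⟪z, x - y⟫| / 2 := fun z hz ↦ by
    rw [inner_add_right, inner_sub_right]
    exact setIntegral_Icc_indicator_Iic_mul (hx ▸ abs_inner_le_norm_of_norm_eq_one hz x)
      (hy ▸ abs_inner_le_norm_of_norm_eq_one hz y)
  have hadd : Integrable (fun z ↦ ⟪z, x + y⟫) σ :=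
    integrable_of_abs_le_on_sphere (by fun_prop) fun z hz ↦ abs_inner_le_norm_of_norm_eq_one hz _
  have hsub : Integrable (fun z ↦ |⟪z, x - y⟫|) σ :=
    integrable_of_abs_le_on_sphere (by fun_prop) fun z hz ↦
      (abs_abs _).trans_le (abs_inner_le_norm_of_norm_eq_one hz _)
  rw [integral_prod_symm _ hint,
    integral_congr_ae (IsUniformOnSphere.ae_norm_eq_one.mono hinner),
    integral_sub (integrable_const_add_iff.2 (hadd.div_const _)) (hsub.div_const _),
    integral_add (integrable_const _) (hadd.div_const _), integral_div, integral_div,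
    integral_abs_inner, integral_inner_eq_zero, dist_eq_norm]
  simp
  ring

lemma isGramFactorization_capIndicator :
    IsGramFactorization (fun r ↦ 1 - stolarskyConst σ * r) capIndicator
      ((volume.restrict (Set.Icc (-1) 1)).prod σ) where
  measurable := measurable_uncurry_capIndicator
  exists_bound := ⟨1, by simp, fun x _ c ↦ by
    simp only [capIndicator, Set.indicator_apply, Pi.one_apply]
    split_ifs <;> simp⟩
  integral_mul _ _ := integral_capIndicator_mul

theorem stolarsky_invariance_principle {μ : Measure V} [IsProbabilityMeasure μ]
    (hμ : ∀ᵐ x ∂μ, ‖x‖ = 1) :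
    ∫ t in Set.Icc (-1) 1, ∫ y, (μ.real {z | t ≤ ⟪y, z⟫} - σ.real {z | t ≤ ⟪y, z⟫}) ^ 2 ∂σ =
      stolarskyConst σ * (radialEnergy id σ - radialEnergy id μ) := by
  have hσ : ∀ᵐ x ∂σ, ‖x‖ = 1 := IsUniformOnSphere.ae_norm_eq_one
  have hgram := isGramFactorization_capIndicator (σ := σ)
  have hsq := hgram.integral_sq_sub (σ := σ) (by fun_prop) hμ
  rw [integral_prod _ (hgram.integrable_sq_sub hμ hσ),
    radialEnergy_sub_mul continuous_id' hμ, radialEnergy_sub_mul continuous_id' hσ] at hsq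
  simp only [integral_capIndicator] at hsq
  exact hsq.trans ((sub_sub_sub_cancel_left _ _ _).trans (mul_sub _ _ _).symm)

end Stolarsky

/-! ## Empirical measures -/

/-- The empirical measure `N⁻¹ ∑ δ_{x i}` of an `N`-point configuration; it turns discrepancies
and energies of configurations into those of probability measures. -/
def empiricalMeasure {X : Type*} [MeasurableSpace X] {N : ℕ} (x : Fin N → X) : Measure X :=
  (N : ℝ≥0∞)⁻¹ • ∑ i, Measure.dirac (x i)

section EmpiricalMeasure

variable {X : Type*} [MeasurableSpace X] {N : ℕ}

instance [NeZero N] (x : Fin N → X) : IsProbabilityMeasure (empiricalMeasure x) where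
  measure_univ := by
    simp [empiricalMeasure,
      ENNReal.inv_mul_cancel (NeZero.ne (N : ℝ≥0∞)) (ENNReal.natCast_ne_top N)]

lemma empiricalMeasure_real_apply (x : Fin N → X) {s : Set X} (hs : MeasurableSet s) :
    (empiricalMeasure x).real s = Nat.card {k // x k ∈ s} / N := by
  classical
  simp [empiricalMeasure, Measure.real, Measure.dirac_apply' _ hs, Set.indicator_apply,
    Fintype.card_subtype, div_eq_inv_mul]

lemma ae_empiricalMeasure [MeasurableSingletonClass X] {x : Fin N → X} {p : X → Prop}
    (hp : ∀ i, p (x i)) : ∀ᵐ z ∂empiricalMeasure x, p z := by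
  refine Measure.ae_smul_measure (mem_ae_iff.2 ?_) _
  simp [Measure.dirac_apply, hp]

end EmpiricalMeasure

section EmpiricalEnergy

variable {X : Type*} [PseudoMetricSpace X] [MeasurableSpace X] {N : ℕ}

lemma radialEnergy_smul_sum {ι : Type*} [Fintype ι] {F : ℝ → ℝ} (c : ℝ≥0∞) {ν : ι → Measure X}
    [∀ i, SFinite (ν i)]
    (hint : ∀ i j, Integrable (fun p : X × X ↦ F (dist p.1 p.2)) ((ν i).prod (ν j))) :
    radialEnergy F (c • ∑ i, ν i) =
      c.toReal ^ 2 * ∑ i, ∑ j, ∫ p, F (dist p.1 p.2) ∂(ν i).prod (ν j) := by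
  simp only [radialEnergy, ← Measure.sum_fintype, Measure.prod_smul_left, Measure.prod_smul_right,
    Measure.prod_sum, integral_smul_measure, smul_eq_mul]
  rw [Measure.sum_fintype, integral_finsetSum_measure fun p _ ↦ hint p.1 p.2,
    Fintype.sum_prod_type, sq, mul_assoc]

lemma radialEnergy_empiricalMeasure [MeasurableSingletonClass X] (F : ℝ → ℝ) (x : Fin N → X) :
    radialEnergy F (empiricalMeasure x) = (∑ i, ∑ j, F (dist (x i) (x j))) / N ^ 2 := by
  rw [empiricalMeasure, radialEnergy_smul_sum _ fun i j ↦ by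
    rw [Measure.dirac_prod_dirac]; exact integrable_dirac ENNReal.coe_lt_top]
  simp [Measure.dirac_prod_dirac, div_eq_inv_mul]

-- Only the diagonal terms are kept.
lemma inv_le_radialEnergy_empiricalMeasure [MeasurableSingletonClass X] {F : ℝ → ℝ}
    (hF : ∀ r, 0 ≤ F r) (hF₀ : F 0 = 1) (x : Fin N → X) :
    (N : ℝ)⁻¹ ≤ radialEnergy F (empiricalMeasure x) := by
  have hdiag : ∀ i, 1 ≤ ∑ j, F (dist (x i) (x j)) := fun i ↦ by
    simpa [hF₀] using Finset.single_le_sum (fun j _ ↦ hF (dist (x i) (x j))) (Finset.mem_univ i)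
  calc (N : ℝ)⁻¹ = (∑ _i : Fin N, (1 : ℝ)) / N ^ 2 := by
        simp [sq]
    _ ≤ (∑ i, ∑ j, F (dist (x i) (x j))) / N ^ 2 := by gcongr with i; exact hdiag i
    _ = radialEnergy F (empiricalMeasure x) := (radialEnergy_empiricalMeasure F x).symm

end EmpiricalEnergy

/-! ## Gaussian energies -/

section Gaussian

lemma half_sq_sub_one_le_norm_sub_sq {E : Type*} [SeminormedAddCommGroup E] {x : E} (hx : ‖x‖ = 1)
    (z : E) :
    1 / 2 * ‖z‖ ^ 2 - 1 ≤ ‖x - z‖ ^ 2 := by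
  have h := abs_norm_sub_norm_le x z
  rw [hx] at h
  have := sq_le_sq.2 (h.trans_eq (abs_norm _).symm)
  nlinarith [sq_nonneg (‖z‖ - 2)]

variable {V : Type*} [NormedAddCommGroup V] [InnerProductSpace ℝ V]

lemma norm_sub_sq_add_norm_sub_sq (x y z : V) :
    ‖x - z‖ ^ 2 + ‖y - z‖ ^ 2 =
      1 / 2 * dist x y ^ 2 + 2 * ‖z - (1 / 2 : ℝ) • (x + y)‖ ^ 2 := by
  have h := parallelogram_law_with_norm ℝ (x - z) (y - z)
  rw [sub_sub_sub_cancel_right, show x - z + (y - z) = (-2 : ℝ) • (z - (1 / 2 : ℝ) • (x + y)) by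
    module, norm_smul, norm_neg, Real.norm_two] at h
  rw [dist_eq_norm]
  linarith

variable [FiniteDimensional ℝ V] [MeasurableSpace V] [BorelSpace V]

lemma integrable_rexp_neg_mul_sq_norm {b : ℝ} (hb : 0 < b) :
    Integrable fun v : V ↦ rexp (-b * ‖v‖ ^ 2) :=
  .of_integral_ne_zero <| by
    rw [GaussianFourier.integral_rexp_neg_mul_sq_norm hb]
    positivity

lemma isGramFactorization_gaussian {τ : ℝ} (hτ : 0 < τ) :
    IsGramFactorization
      (fun r ↦ (∫ v : V, rexp (-(4 * τ ^ 2) * ‖v‖ ^ 2)) * rexp (-τ ^ 2 * r ^ 2))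
      (fun (x z : V) ↦ rexp (-2 * τ ^ 2 * ‖x - z‖ ^ 2)) volume where
  measurable := by unfold Function.uncurry; fun_prop
  exists_bound := by
    refine ⟨fun z ↦ rexp (2 * τ ^ 2) * rexp (-τ ^ 2 * ‖z‖ ^ 2), ?_, fun x hx z ↦ ?_⟩
    · refine ((integrable_rexp_neg_mul_sq_norm (V := V) (b := 2 * τ ^ 2) (by positivity)).const_mul
        (rexp (2 * τ ^ 2) ^ 2)).congr (.of_forall fun z ↦ ?_)
      simp only [mul_pow, ← Real.exp_nat_mul]
      ring_nf
    · beta_reduce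
      rw [Real.abs_exp, ← Real.exp_add, Real.exp_le_exp]
      nlinarith [half_sq_sub_one_le_norm_sub_sq hx z]
  integral_mul x y _ _ := by
    have hpointwise : ∀ z, rexp (-2 * τ ^ 2 * ‖x - z‖ ^ 2) * rexp (-2 * τ ^ 2 * ‖y - z‖ ^ 2) =
        rexp (-(4 * τ ^ 2) * ‖z - (1 / 2 : ℝ) • (x + y)‖ ^ 2) * rexp (-τ ^ 2 * dist x y ^ 2) :=
      fun z ↦ by
        rw [← Real.exp_add, ← Real.exp_add, ← mul_add, norm_sub_sq_add_norm_sub_sq]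
        ring_nf
    simp only [hpointwise]
    rw [integral_mul_const,
      integral_sub_right_eq_self fun z ↦ rexp (-(4 * τ ^ 2) * ‖z‖ ^ 2)]

lemma radialEnergy_gaussian_le {σ μ : Measure V} [IsUniformOnSphere σ] [IsProbabilityMeasure μ]
    (hμ : ∀ᵐ x ∂μ, ‖x‖ = 1) {τ : ℝ} (hτ : 0 < τ) :
    radialEnergy (fun r ↦ rexp (-τ ^ 2 * r ^ 2)) σ ≤
      radialEnergy (fun r ↦ rexp (-τ ^ 2 * r ^ 2)) μ := by
  have hmass : 0 < ∫ v : V, rexp (-(4 * τ ^ 2) * ‖v‖ ^ 2) := by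
    rw [GaussianFourier.integral_rexp_neg_mul_sq_norm (by positivity)]
    positivity
  have hsq := (isGramFactorization_gaussian hτ).integral_sq_sub (σ := σ) (by fun_prop) hμ
  have hnonneg := hsq ▸ integral_nonneg fun _ ↦ sq_nonneg _
  simp only [radialEnergy, integral_const_mul] at hnonneg
  exact le_of_mul_le_mul_left (sub_nonneg.1 hnonneg) hmass

end Gaussian

/-! ## Subordination of the distance to Gaussians -/

/-- The integrand of the subordination formula `r = c⁻¹ ∫ (1 - exp(-τ² r²)) τ⁻² dτ` over `τ > 0`,
which writes the distance as a mixture of Gaussians. -/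
def gaussianDeficit (τ r : ℝ) : ℝ :=
  (τ ^ 2)⁻¹ - (τ ^ 2)⁻¹ * rexp (-τ ^ 2 * r ^ 2)

/-- The constant `c` in the subordination formula. -/
def subordinationConst : ℝ := ∫ τ in Set.Ioi 0, gaussianDeficit τ 1

section Subordination

lemma gaussianDeficit_nonneg (τ r : ℝ) : 0 ≤ gaussianDeficit τ r :=
  sub_nonneg.2 <| mul_le_of_le_one_right (by positivity) <| exp_le_one_iff.2 <| by
    rw [neg_mul, neg_nonpos]
    positivity

lemma gaussianDeficit_le_gaussianDeficit (τ : ℝ) {r s : ℝ} (hr : 0 ≤ r) (hrs : r ≤ s) :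
    gaussianDeficit τ r ≤ gaussianDeficit τ s := by
  unfold gaussianDeficit
  simp only [neg_mul]
  gcongr

@[fun_prop]
lemma measurable_uncurry_gaussianDeficit : Measurable (Function.uncurry gaussianDeficit) := by
  unfold gaussianDeficit Function.uncurry
  fun_prop

lemma gaussianDeficit_eq_sq_mul {r : ℝ} (hr : 0 < r) (τ : ℝ) :
    gaussianDeficit τ r = r ^ 2 * gaussianDeficit (r * τ) 1 := by
  simp only [gaussianDeficit]
  field_simp

lemma gaussianDeficit_one_le (τ : ℝ) : gaussianDeficit τ 1 ≤ 2 * (1 + τ ^ 2)⁻¹ := by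
  rcases eq_or_ne τ 0 with rfl | hτ
  · simp [gaussianDeficit]
  have hexp := add_one_le_exp (-τ ^ 2)
  have hpos := Real.exp_pos (-τ ^ 2)
  have hτ2 : 0 < τ ^ 2 := by positivity
  rw [gaussianDeficit, one_pow, mul_one, ← mul_one_sub, ← div_eq_inv_mul, ← div_eq_mul_inv,
    div_le_div_iff₀ hτ2 (by positivity)]
  nlinarith

lemma integrableOn_gaussianDeficit_one : IntegrableOn (gaussianDeficit · 1) (Set.Ioi 0) := by
  refine (integrable_inv_one_add_sq.const_mul 2).integrableOn.mono'
    (by fun_prop : Measurable _).aestronglyMeasurable (.of_forall fun τ ↦ ?_)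
  rw [Real.norm_of_nonneg (gaussianDeficit_nonneg τ 1)]
  exact gaussianDeficit_one_le τ

lemma integrableOn_gaussianDeficit {r : ℝ} (hr : 0 < r) :
    IntegrableOn (gaussianDeficit · r) (Set.Ioi 0) := by
  simp only [gaussianDeficit_eq_sq_mul hr]
  have hscaled : IntegrableOn (fun τ ↦ gaussianDeficit (r * τ) 1) (Set.Ioi 0) :=
    (integrableOn_Ioi_comp_mul_left_iff (gaussianDeficit · 1) 0 hr).2 <| by
      simpa using integrableOn_gaussianDeficit_one
  exact hscaled.const_mul (r ^ 2)

lemma integral_gaussianDeficit {r : ℝ} (hr : 0 ≤ r) :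
    ∫ τ in Set.Ioi 0, gaussianDeficit τ r = subordinationConst * r := by
  rcases hr.eq_or_lt with rfl | hr
  · simp [gaussianDeficit]
  simp only [gaussianDeficit_eq_sq_mul hr]
  rw [integral_const_mul, integral_comp_mul_left_Ioi (gaussianDeficit · 1) 0 hr, mul_zero,
    smul_eq_mul, subordinationConst]
  field_simp

lemma subordinationConst_pos : 0 < subordinationConst := by
  have hsupport : Set.Ioi (0 : ℝ) ⊆ Function.support (gaussianDeficit · 1) := fun τ hτ ↦ by
    have hτ2 : 0 < τ ^ 2 := pow_pos hτ 2
    refine (sub_pos.2 (mul_lt_of_lt_one_right (inv_pos.2 hτ2) (Real.exp_lt_one_iff.2 ?_))).ne'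
    linarith
  rw [subordinationConst, setIntegral_pos_iff_support_of_nonneg_ae
    (.of_forall fun τ ↦ gaussianDeficit_nonneg τ 1) integrableOn_gaussianDeficit_one,
    Set.inter_eq_right.2 hsupport, volume_Ioi]
  exact ENNReal.zero_lt_top

lemma integrableOn_Ioi_inv_sq {a : ℝ} (ha : 0 < a) :
    IntegrableOn (fun τ : ℝ ↦ (τ ^ 2)⁻¹) (Set.Ioi a) := by
  simpa [Real.rpow_neg_ofNat] using integrableOn_Ioi_rpow_of_lt (a := -2) (by norm_num) ha

lemma integral_Ioi_inv_sq {a : ℝ} (ha : 0 < a) : ∫ τ in Set.Ioi a, (τ ^ 2)⁻¹ = a⁻¹ := by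
  have h := integral_Ioi_rpow_of_lt (a := -2) (by norm_num) ha
  norm_num [Real.rpow_neg_one] at h
  exact h

variable {V : Type*} [NormedAddCommGroup V] [InnerProductSpace ℝ V] [MeasurableSpace V]
  [BorelSpace V] [FiniteDimensional ℝ V] {σ μ : Measure V}

lemma integrable_gaussianDeficit_dist [IsFiniteMeasure μ] (hμ : ∀ᵐ x ∂μ, ‖x‖ = 1) :
    Integrable (fun q : ℝ × V × V ↦ gaussianDeficit q.1 (dist q.2.1 q.2.2))
      ((volume.restrict (Set.Ioi 0)).prod (μ.prod μ)) := by
  have hmeas : Measurable fun q : ℝ × V × V ↦ gaussianDeficit q.1 (dist q.2.1 q.2.2) := by fun_prop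
  refine ((integrableOn_gaussianDeficit two_pos).comp_fst (μ.prod μ)).mono'
    hmeas.aestronglyMeasurable ?_
  filter_upwards [Measure.quasiMeasurePreserving_snd.ae (ae_prod_norm_eq_one hμ hμ)] with q hq
  rw [Real.norm_of_nonneg (gaussianDeficit_nonneg _ _)]
  exact gaussianDeficit_le_gaussianDeficit _ dist_nonneg (dist_le_two_of_norm_eq_one hq.1 hq.2)

lemma integrableOn_radialEnergy_gaussianDeficit [IsFiniteMeasure μ] (hμ : ∀ᵐ x ∂μ, ‖x‖ = 1) :
    IntegrableOn (fun τ ↦ radialEnergy (gaussianDeficit τ) μ) (Set.Ioi 0) :=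
  (integrable_gaussianDeficit_dist hμ).integral_prod_left

lemma integral_radialEnergy_gaussianDeficit [IsFiniteMeasure μ] (hμ : ∀ᵐ x ∂μ, ‖x‖ = 1) :
    ∫ τ in Set.Ioi 0, radialEnergy (gaussianDeficit τ) μ =
      subordinationConst * radialEnergy id μ := by
  simp only [radialEnergy]
  rw [integral_integral_swap (integrable_gaussianDeficit_dist hμ), ← integral_const_mul]
  simp only [integral_gaussianDeficit dist_nonneg, id]

lemma radialEnergy_gaussianDeficit [IsProbabilityMeasure μ] (hμ : ∀ᵐ x ∂μ, ‖x‖ = 1) (τ : ℝ) :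
    radialEnergy (gaussianDeficit τ) μ =
      (τ ^ 2)⁻¹ - (τ ^ 2)⁻¹ * radialEnergy (fun r ↦ rexp (-τ ^ 2 * r ^ 2)) μ :=
  radialEnergy_sub_mul (by fun_prop) hμ _ _

lemma div_le_radialEnergy_id_sub [IsUniformOnSphere σ] [IsProbabilityMeasure μ]
    (hμ : ∀ᵐ x ∂μ, ‖x‖ = 1) {a δ : ℝ} (ha : 0 < a)
    (hδ : ∀ τ, a < τ → δ ≤ radialEnergy (fun r ↦ rexp (-τ ^ 2 * r ^ 2)) μ -
      radialEnergy (fun r ↦ rexp (-τ ^ 2 * r ^ 2)) σ) :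
    δ / a ≤ subordinationConst * (radialEnergy id σ - radialEnergy id μ) := by
  have hσ : ∀ᵐ x ∂σ, ‖x‖ = 1 := IsUniformOnSphere.ae_norm_eq_one
  let gap (τ : ℝ) : ℝ := radialEnergy (gaussianDeficit τ) σ - radialEnergy (gaussianDeficit τ) μ
  have hgap (τ : ℝ) : gap τ = (τ ^ 2)⁻¹ * (radialEnergy (fun r ↦ rexp (-τ ^ 2 * r ^ 2)) μ -
      radialEnergy (fun r ↦ rexp (-τ ^ 2 * r ^ 2)) σ) := by
    linear_combination radialEnergy_gaussianDeficit hσ τ - radialEnergy_gaussianDeficit hμ τ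
  have hintegrable : IntegrableOn gap (Set.Ioi 0) :=
    (integrableOn_radialEnergy_gaussianDeficit hσ).sub
      (integrableOn_radialEnergy_gaussianDeficit hμ)
  have hsubset : Set.Ioi a ⊆ Set.Ioi 0 := Set.Ioi_subset_Ioi ha.le
  calc δ / a = ∫ τ in Set.Ioi a, (τ ^ 2)⁻¹ * δ := by
        rw [integral_mul_const, integral_Ioi_inv_sq ha, inv_mul_eq_div]
    _ ≤ ∫ τ in Set.Ioi a, gap τ := by
        refine setIntegral_mono_on ((integrableOn_Ioi_inv_sq ha).mul_const δ)
          (hintegrable.mono_set hsubset) measurableSet_Ioi fun τ hτ ↦ ?_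
        rw [hgap]
        gcongr
        exact hδ τ hτ
    _ ≤ ∫ τ in Set.Ioi 0, gap τ := by
        refine setIntegral_mono_set hintegrable ?_ hsubset.eventuallyLE
        filter_upwards [ae_restrict_mem measurableSet_Ioi] with τ hτ
        rw [Pi.zero_apply, hgap]
        exact mul_nonneg (by positivity) (sub_nonneg.2 (radialEnergy_gaussian_le hμ hτ))
    _ = subordinationConst * (radialEnergy id σ - radialEnergy id μ) := by
        rw [integral_sub (integrableOn_radialEnergy_gaussianDeficit hσ)
          (integrableOn_radialEnergy_gaussianDeficit hμ),
          integral_radialEnergy_gaussianDeficit hσ, integral_radialEnergy_gaussianDeficit hμ,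
          mul_sub]

end Subordination

/-! ## Projections, lifts and charts of the sphere -/

/-- The orthogonal projection of `ℝ^{d+1}` onto the equatorial hyperplane `ℝ^d`, which forgets the
last coordinate. -/
def equatorialProj (d : ℕ) : EuclideanSpace ℝ (Fin (d + 1)) →ₗ[ℝ] EuclideanSpace ℝ (Fin d) where
  toFun x := WithLp.toLp 2 fun i ↦ x i.castSucc
  map_add' _ _ := rfl
  map_smul' _ _ := rfl

/-- The point of the upper hemisphere of `S^d` above the point `u` of the closed unit ball of
`ℝ^d`. -/
def hemisphereLift {d : ℕ} (u : EuclideanSpace ℝ (Fin d)) : EuclideanSpace ℝ (Fin (d + 1)) :=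
  WithLp.toLp 2 (Fin.snoc (α := fun _ ↦ ℝ) (fun i ↦ u i) √(1 - ‖u‖ ^ 2))

/-- Stereographic projection of each hemisphere of `S^d` from the opposite pole, onto the unit
ball of `ℝ^d`. -/
def hemisphereProj {d : ℕ} (x : EuclideanSpace ℝ (Fin (d + 1))) : EuclideanSpace ℝ (Fin d) :=
  (1 + |x (Fin.last d)|)⁻¹ • equatorialProj d x

/-- A chart of all of `S^d` with Lipschitz inverse: the image of the upper hemisphere under
`hemisphereProj` is translated away from the image of the lower one. -/
def sphereChart {d : ℕ} [NeZero d] (x : EuclideanSpace ℝ (Fin (d + 1))) :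
    EuclideanSpace ℝ (Fin d) :=
  hemisphereProj x + if 0 ≤ x (Fin.last d) then EuclideanSpace.single 0 3 else 0

section Geometry

lemma norm_sub_sq_add_sq_sub {E : Type*} [NormedAddCommGroup E] [InnerProductSpace ℝ E] {u v : E}
    {s t : ℝ} (hu : ‖u‖ ^ 2 = 1 - s ^ 2) (hv : ‖v‖ ^ 2 = 1 - t ^ 2) (hs : 1 + s ≠ 0)
    (ht : 1 + t ≠ 0) :
    ‖u - v‖ ^ 2 + (s - t) ^ 2 =
      (1 + s) * (1 + t) * ‖(1 + s)⁻¹ • u - (1 + t)⁻¹ • v‖ ^ 2 := by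
  rw [norm_sub_sq_real, norm_sub_sq_real, inner_smul_left, inner_smul_right, norm_smul, norm_smul,
    mul_pow, mul_pow, Real.norm_eq_abs, Real.norm_eq_abs, sq_abs, sq_abs, hu, hv, conj_trivial]
  field_simp
  ring

variable {d : ℕ}

lemma norm_sq_eq_norm_equatorialProj_sq_add (x : EuclideanSpace ℝ (Fin (d + 1))) :
    ‖x‖ ^ 2 = ‖equatorialProj d x‖ ^ 2 + x (Fin.last d) ^ 2 := by
  simp only [EuclideanSpace.real_norm_sq_eq, Fin.sum_univ_castSucc]
  rfl

lemma norm_equatorialProj_le (x : EuclideanSpace ℝ (Fin (d + 1))) : ‖equatorialProj d x‖ ≤ ‖x‖ :=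
  (sq_le_sq₀ (norm_nonneg _) (norm_nonneg _)).1 <| by
    rw [norm_sq_eq_norm_equatorialProj_sq_add x]
    exact le_add_of_nonneg_right (sq_nonneg _)

lemma norm_equatorialProj_sq {x : EuclideanSpace ℝ (Fin (d + 1))} (hx : ‖x‖ = 1) :
    ‖equatorialProj d x‖ ^ 2 = 1 - |x (Fin.last d)| ^ 2 := by
  rw [sq_abs, eq_sub_iff_add_eq, ← norm_sq_eq_norm_equatorialProj_sq_add, hx, one_pow]

lemma lipschitzWith_equatorialProj : LipschitzWith 1 (equatorialProj d) :=
  .of_dist_le_mul fun x y ↦ by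
    rw [NNReal.coe_one, one_mul, dist_eq_norm, dist_eq_norm, ← map_sub]
    exact norm_equatorialProj_le _

lemma measurable_equatorialProj : Measurable (equatorialProj d) :=
  lipschitzWith_equatorialProj.continuous.measurable

lemma equatorialProj_hemisphereLift (u : EuclideanSpace ℝ (Fin d)) :
    equatorialProj d (hemisphereLift u) = u := by
  ext i
  simp only [hemisphereLift]
  exact Fin.snoc_castSucc (α := fun _ ↦ ℝ) _ _ i

lemma norm_hemisphereLift {u : EuclideanSpace ℝ (Fin d)} (hu : ‖u‖ ≤ 1) :
    ‖hemisphereLift u‖ = 1 := by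
  have hlast : hemisphereLift u (Fin.last d) = √(1 - ‖u‖ ^ 2) := by simp [hemisphereLift]
  rw [← sq_eq_sq₀ (norm_nonneg _) zero_le_one, norm_sq_eq_norm_equatorialProj_sq_add,
    equatorialProj_hemisphereLift, hlast, Real.sq_sqrt, add_sub_cancel, one_pow]
  exact sub_nonneg.2 (pow_le_one₀ (norm_nonneg u) hu)

lemma measurable_hemisphereLift : Measurable (hemisphereLift (d := d)) := by
  refine (PiLp.continuous_toLp 2 _).measurable.comp (measurable_pi_iff.2 fun i ↦ ?_)
  cases i using Fin.lastCases <;> simp only [Fin.snoc_last, Fin.snoc_castSucc] <;> fun_prop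

lemma closedBall_subset_equatorialProj_image_sphere :
    closedBall 0 1 ⊆ equatorialProj d '' sphere 0 1 := fun u hu ↦
  ⟨hemisphereLift u, by simpa using norm_hemisphereLift (mem_closedBall_zero_iff.1 hu),
    equatorialProj_hemisphereLift u⟩

lemma norm_hemisphereProj_le_one {x : EuclideanSpace ℝ (Fin (d + 1))} (hx : ‖x‖ = 1) :
    ‖hemisphereProj x‖ ≤ 1 := by
  have hone : 1 ≤ 1 + |x (Fin.last d)| := le_add_of_nonneg_right (abs_nonneg _)
  rw [hemisphereProj, norm_smul, Real.norm_of_nonneg (by positivity),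
    inv_mul_le_one₀ (by positivity)]
  exact ((norm_equatorialProj_le x).trans_eq hx).trans hone

lemma dist_le_two_mul_dist_hemisphereProj {x y : EuclideanSpace ℝ (Fin (d + 1))} (hx : ‖x‖ = 1)
    (hy : ‖y‖ = 1) (hxy : 0 ≤ x (Fin.last d) ↔ 0 ≤ y (Fin.last d)) :
    dist x y ≤ 2 * dist (hemisphereProj x) (hemisphereProj y) := by
  have hlast : ∀ z : EuclideanSpace ℝ (Fin (d + 1)), ‖z‖ = 1 → 1 + |z (Fin.last d)| ≤ 2 :=
    fun z hz ↦ by linarith [(PiLp.norm_apply_le z (Fin.last d)).trans_eq hz,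
      Real.norm_eq_abs (z (Fin.last d))]
  have habs : (x (Fin.last d) - y (Fin.last d)) ^ 2 =
      (|x (Fin.last d)| - |y (Fin.last d)|) ^ 2 := by
    by_cases h : 0 ≤ x (Fin.last d)
    · rw [abs_of_nonneg h, abs_of_nonneg (hxy.1 h)]
    · rw [abs_of_neg (not_le.1 h), abs_of_neg (not_le.1 (mt hxy.2 h))]
      ring
  have hchord := norm_sub_sq_add_sq_sub (norm_equatorialProj_sq hx) (norm_equatorialProj_sq hy)
    (by positivity) (by positivity)
  rw [← sq_le_sq₀ dist_nonneg (by positivity)]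
  calc dist x y ^ 2
      = ‖equatorialProj d x - equatorialProj d y‖ ^ 2 +
          (|x (Fin.last d)| - |y (Fin.last d)|) ^ 2 := by
        rw [dist_eq_norm, norm_sq_eq_norm_equatorialProj_sq_add, map_sub, ← habs]
        rfl
    _ = (1 + |x (Fin.last d)|) * (1 + |y (Fin.last d)|) *
          dist (hemisphereProj x) (hemisphereProj y) ^ 2 := by
        rw [hchord, dist_eq_norm]
        rfl
    _ ≤ 2 * 2 * dist (hemisphereProj x) (hemisphereProj y) ^ 2 := by
        gcongr
        exacts [hlast x hx, hlast y hy]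
    _ = (2 * dist (hemisphereProj x) (hemisphereProj y)) ^ 2 := by ring

variable [NeZero d]

lemma norm_sphereChart_le {x : EuclideanSpace ℝ (Fin (d + 1))} (hx : ‖x‖ = 1) :
    ‖sphereChart x‖ ≤ 4 := by
  refine (norm_add_le_of_le (r₂ := 3) (norm_hemisphereProj_le_one hx) ?_).trans_eq (by norm_num)
  split_ifs <;> simp

lemma dist_le_two_mul_dist_sphereChart {x y : EuclideanSpace ℝ (Fin (d + 1))} (hx : ‖x‖ = 1)
    (hy : ‖y‖ = 1) : dist x y ≤ 2 * dist (sphereChart x) (sphereChart y) := by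
  by_cases hxy : 0 ≤ x (Fin.last d) ↔ 0 ≤ y (Fin.last d)
  · simp only [sphereChart, hxy, dist_add_right]
    exact dist_le_two_mul_dist_hemisphereProj hx hy hxy
  · have hshift :
        3 = dist (sphereChart x - hemisphereProj x) (sphereChart y - hemisphereProj y) := by
      simp only [sphereChart, add_sub_cancel_left]
      split_ifs <;> first | tauto | simp
    have hproj : dist (hemisphereProj x) (hemisphereProj y) ≤ 2 := by
      linarith [dist_le_norm_add_norm (hemisphereProj x) (hemisphereProj y),
        norm_hemisphereProj_le_one hx, norm_hemisphereProj_le_one hy]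
    linarith [dist_le_two_of_norm_eq_one hx hy, dist_sub_sub_le (sphereChart x) (hemisphereProj x)
      (sphereChart y) (hemisphereProj y)]

lemma measurable_sphereChart : Measurable (sphereChart (d := d)) := by
  have hproj : Measurable (hemisphereProj (d := d)) := by
    unfold hemisphereProj
    exact (by fun_prop : Measurable fun x : EuclideanSpace ℝ (Fin (d + 1)) ↦
      (1 + |x (Fin.last d)|)⁻¹).smul measurable_equatorialProj
  exact hproj.add (.ite (measurableSet_le measurable_const (by fun_prop)) measurable_const
    measurable_const)

end Geometry

/-! ## Normalized Hausdorff measure on the sphere -/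

section Hausdorff

lemma hausdorffMeasure_lt_top_of_antilipschitzWith {X E : Type*} [MetricSpace X]
    [MeasurableSpace X] [BorelSpace X] [NormedAddCommGroup E] [NormedSpace ℝ E]
    [FiniteDimensional ℝ E] [MeasurableSpace E] [BorelSpace E] {s : Set X} {K : ℝ≥0} {f : s → E}
    (hf : AntilipschitzWith K f) (hbdd : Bornology.IsBounded (Set.range f)) :
    μH[Module.finrank ℝ E] s < ∞ := by
  have hpreimage := hf.hausdorffMeasure_preimage_le (Nat.cast_nonneg (Module.finrank ℝ E))
    (Set.range f)
  rw [Set.preimage_range,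
    ← isometry_subtype_coe.hausdorffMeasure_image (Or.inl (Nat.cast_nonneg _)), Set.image_univ,
    Subtype.range_coe] at hpreimage
  exact hpreimage.trans_lt (ENNReal.mul_lt_top
    (ENNReal.rpow_lt_top_of_nonneg (Nat.cast_nonneg _) ENNReal.coe_ne_top) hbdd.measure_lt_top)

variable {d : ℕ}

lemma hausdorffMeasure_sphere_lt_top [NeZero d] :
    μH[d] (sphere (0 : EuclideanSpace ℝ (Fin (d + 1))) 1) < ∞ := by
  have hf : AntilipschitzWith 2
      fun x : sphere (0 : EuclideanSpace ℝ (Fin (d + 1))) 1 ↦ sphereChart x.1 :=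
    .of_le_mul_dist fun x y ↦ dist_le_two_mul_dist_sphereChart (mem_sphere_zero_iff_norm.1 x.2)
      (mem_sphere_zero_iff_norm.1 y.2)
  simpa using hausdorffMeasure_lt_top_of_antilipschitzWith hf <|
    isBounded_closedBall.subset <| Set.range_subset_iff.2 fun x ↦
      mem_closedBall_zero_iff.2 <| norm_sphereChart_le (mem_sphere_zero_iff_norm.1 x.2)

lemma hausdorffMeasure_sphere_pos :
    0 < μH[d] (sphere (0 : EuclideanSpace ℝ (Fin (d + 1))) 1) := by
  have himage := lipschitzWith_equatorialProj.hausdorffMeasure_image_le (Nat.cast_nonneg d)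
    (sphere (0 : EuclideanSpace ℝ (Fin (d + 1))) 1)
  rw [ENNReal.coe_one, ENNReal.one_rpow, one_mul] at himage
  have hball : 0 < μH[d] (closedBall (0 : EuclideanSpace ℝ (Fin d)) 1) := by
    simpa using measure_closedBall_pos μH[Module.finrank ℝ (EuclideanSpace ℝ (Fin d))]
      (0 : EuclideanSpace ℝ (Fin d)) one_pos
  exact hball.trans_le ((measure_mono closedBall_subset_equatorialProj_image_sphere).trans himage)

instance isUniformOnSphere_sigmaMeasure [NeZero d] : IsUniformOnSphere (sigmaMeasure d) where
  measure_univ := by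
    rw [sigmaMeasure, Measure.smul_apply, Measure.restrict_apply_univ, smul_eq_mul]
    exact ENNReal.inv_mul_cancel hausdorffMeasure_sphere_pos.ne' hausdorffMeasure_sphere_lt_top.ne
  ae_norm_eq_one := Measure.ae_smul_measure ((ae_restrict_mem isClosed_sphere.measurableSet).mono
    fun _ ↦ mem_sphere_zero_iff_norm.1) _
  measurePreserving L := by
    have hpreimage : L.toIsometryEquiv ⁻¹' sphere 0 1 = sphere 0 1 := by
      ext x
      simp
    have hrestrict := (L.toIsometryEquiv.measurePreserving_hausdorffMeasure d).restrict_preimage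
      (s := sphere 0 1) isClosed_sphere.measurableSet
    rw [hpreimage] at hrestrict
    exact hrestrict.smul_measure _

end Hausdorff

/-! ## Lower bound for the energy gap -/

section LowerBound

lemma radialEnergy_le_of_potential_le {V : Type*} [NormedAddCommGroup V] [InnerProductSpace ℝ V]
    [FiniteDimensional ℝ V] [MeasurableSpace V] [BorelSpace V] {σ ν : Measure V}
    [IsUniformOnSphere σ] [IsProbabilityMeasure ν] {F : ℝ → ℝ} (hF : Continuous F)
    (hν : ∀ᵐ x ∂ν, ‖x‖ = 1) {B : ℝ} (hB : ∀ z, ∫ x, F (dist x z) ∂ν ≤ B) :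
    radialEnergy F σ ≤ B := by
  have hint := integrable_radial hF hν (IsUniformOnSphere.ae_norm_eq_one (σ := σ))
  rw [← integral_radial_eq_radialEnergy hF hν, integral_prod_symm _ hint]
  simpa using integral_mono hint.integral_prod_right (integrable_const B) hB

lemma integral_gaussian_euclideanSpace {d : ℕ} {τ : ℝ} (hτ : 0 < τ) :
    ∫ u : EuclideanSpace ℝ (Fin d), rexp (-τ ^ 2 * ‖u‖ ^ 2) = π ^ ((d : ℝ) / 2) / τ ^ d := by
  rw [GaussianFourier.integral_rexp_neg_mul_sq_norm (by positivity), finrank_euclideanSpace_fin,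
    Real.div_rpow pi_nonneg (by positivity), ← Real.rpow_natCast_mul hτ.le, Nat.cast_ofNat,
    mul_div_cancel₀ _ two_ne_zero, Real.rpow_natCast]

lemma setIntegral_gaussian_hemisphereLift_le {d : ℕ} (s : Set (EuclideanSpace ℝ (Fin d))) {τ : ℝ}
    (hτ : 0 < τ) (z : EuclideanSpace ℝ (Fin (d + 1))) :
    ∫ u in s, rexp (-τ ^ 2 * dist (hemisphereLift u) z ^ 2) ≤ π ^ ((d : ℝ) / 2) / τ ^ d := by
  have hdist : ∀ u, ‖u - equatorialProj d z‖ ≤ dist (hemisphereLift u) z := fun u ↦ by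
    simpa [equatorialProj_hemisphereLift, dist_eq_norm] using
      norm_equatorialProj_le (hemisphereLift u - z)
  have hint : Integrable fun u ↦ rexp (-τ ^ 2 * ‖u - equatorialProj d z‖ ^ 2) :=
    (integrable_rexp_neg_mul_sq_norm (by positivity : 0 < τ ^ 2)).comp_sub_right _
  calc ∫ u in s, rexp (-τ ^ 2 * dist (hemisphereLift u) z ^ 2)
      ≤ ∫ u in s, rexp (-τ ^ 2 * ‖u - equatorialProj d z‖ ^ 2) := by
        refine integral_mono_of_nonneg (.of_forall fun _ ↦ (Real.exp_pos _).le) hint.integrableOn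
          (.of_forall fun u ↦ ?_)
        simp only [neg_mul]
        gcongr
        exact hdist u
    _ ≤ ∫ u, rexp (-τ ^ 2 * ‖u - equatorialProj d z‖ ^ 2) :=
        setIntegral_le_integral hint (.of_forall fun _ ↦ (Real.exp_pos _).le)
    _ = ∫ u : EuclideanSpace ℝ (Fin d), rexp (-τ ^ 2 * ‖u‖ ^ 2) :=
        integral_sub_right_eq_self (fun u ↦ rexp (-τ ^ 2 * ‖u‖ ^ 2)) _
    _ = π ^ ((d : ℝ) / 2) / τ ^ d := integral_gaussian_euclideanSpace hτ

-- The energy of `σ` is unchanged if one of the two points is drawn from the image of the uniform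
-- distribution on the unit ball under `hemisphereLift`, whose potentials are bounded.
lemma exists_radialEnergy_gaussian_le_div (d : ℕ) : ∃ C : ℝ, 0 < C ∧
    ∀ (σ : Measure (EuclideanSpace ℝ (Fin (d + 1)))) [IsUniformOnSphere σ] (τ : ℝ), 0 < τ →
      radialEnergy (fun r ↦ rexp (-τ ^ 2 * r ^ 2)) σ ≤ C / τ ^ d := by
  let B : Set (EuclideanSpace ℝ (Fin d)) := closedBall 0 1
  let ν := (ProbabilityTheory.cond volume B).map hemisphereLift
  have hB₀ : volume B ≠ 0 := (measure_closedBall_pos _ _ one_pos).ne'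
  have hB : 0 < volume.real B := ENNReal.toReal_pos hB₀ measure_closedBall_lt_top.ne
  have : IsProbabilityMeasure (ProbabilityTheory.cond volume B) :=
    ProbabilityTheory.cond_isProbabilityMeasure_of_finite hB₀ measure_closedBall_lt_top.ne
  have : IsProbabilityMeasure ν :=
    Measure.isProbabilityMeasure_map measurable_hemisphereLift.aemeasurable
  have hν : ∀ᵐ x ∂ν, ‖x‖ = 1 := by
    rw [ae_map_iff measurable_hemisphereLift.aemeasurable
      (measurableSet_eq_fun measurable_norm measurable_const)]
    exact (ProbabilityTheory.ae_cond_mem measurableSet_closedBall).mono fun u hu ↦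
      norm_hemisphereLift (mem_closedBall_zero_iff.1 hu)
  refine ⟨(volume.real B)⁻¹ * π ^ ((d : ℝ) / 2), by positivity, fun σ _ τ hτ ↦
    radialEnergy_le_of_potential_le (by fun_prop) hν fun z ↦ ?_⟩
  rw [integral_map measurable_hemisphereLift.aemeasurable (by fun_prop), ProbabilityTheory.cond,
    integral_smul_measure, ENNReal.toReal_inv, smul_eq_mul, mul_div_assoc, ← measureReal_def]
  gcongr
  exact setIntegral_gaussian_hemisphereLift_le B hτ z

lemma exists_le_radialEnergy_id_sub_empiricalMeasure {d : ℕ} (hd : 0 < d) : ∃ c : ℝ, 0 < c ∧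
    ∀ (σ : Measure (EuclideanSpace ℝ (Fin (d + 1)))) [IsUniformOnSphere σ] (N : ℕ) [NeZero N]
      (x : Fin N → EuclideanSpace ℝ (Fin (d + 1))), (∀ i, ‖x i‖ = 1) →
      c * (N : ℝ) ^ (-1 - 1 / d : ℝ) ≤
        radialEnergy id σ - radialEnergy id (empiricalMeasure x) := by
  obtain ⟨C, hC, hupper⟩ := exists_radialEnergy_gaussian_le_div d
  have hκ := subordinationConst_pos
  refine ⟨(2 * subordinationConst * (2 * C) ^ (1 / d : ℝ))⁻¹, by positivity,
    fun σ _ N _ x hx ↦ ?_⟩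
  have hN : (0 : ℝ) < N := Nat.cast_pos.2 (NeZero.pos N)
  -- The scale beyond which the energy of `σ` is at most half of the diagonal term `N⁻¹`.
  let a : ℝ := (2 * C * N) ^ (1 / d : ℝ)
  have ha : 0 < a := by positivity
  have had : a ^ d = 2 * C * N := by
    rw [← Real.rpow_natCast, ← Real.rpow_mul (by positivity), one_div_mul_cancel (by positivity),
      Real.rpow_one]
  have hgap : ∀ τ, a < τ → (N : ℝ)⁻¹ / 2 ≤
      radialEnergy (fun r ↦ rexp (-τ ^ 2 * r ^ 2)) (empiricalMeasure x) -
        radialEnergy (fun r ↦ rexp (-τ ^ 2 * r ^ 2)) σ := fun τ hτ ↦ by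
    have hdiag := inv_le_radialEnergy_empiricalMeasure (F := fun r ↦ rexp (-τ ^ 2 * r ^ 2))
      (fun r ↦ (Real.exp_pos _).le) (by simp) x
    have hσ : radialEnergy (fun r ↦ rexp (-τ ^ 2 * r ^ 2)) σ ≤ (N : ℝ)⁻¹ / 2 :=
      calc _ ≤ C / τ ^ d := hupper σ τ (ha.trans hτ)
        _ ≤ C / a ^ d := by gcongr
        _ = (N : ℝ)⁻¹ / 2 := by rw [had]; field_simp
    linarith
  have hmain := div_le_radialEnergy_id_sub (ae_empiricalMeasure hx) ha hgap
  calc _ = (N : ℝ)⁻¹ / 2 / a / subordinationConst := by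
        rw [Real.rpow_sub hN, Real.rpow_neg_one, show a = (2 * C) ^ (1 / d : ℝ) * N ^ (1 / d : ℝ)
          from Real.mul_rpow (by positivity) hN.le]
        field_simp
    _ ≤ _ := (div_le_iff₀' hκ).2 hmain

end LowerBound

/-! ## Splitting measures along quantiles -/

section QuantileCut

lemma exists_measure_Iio_le_and_le_measure_Iic {μ : Measure ℝ} [IsFiniteMeasure μ] {a b : ℝ}
    (hab : ∀ᵐ x ∂μ, x ∈ Set.Icc a b) {c : ℝ≥0∞} (hc₀ : 0 < c) (hc : c ≤ μ Set.univ) :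
    ∃ t ∈ Set.Icc a b, μ (Set.Iio t) ≤ c ∧ c ≤ μ (Set.Iic t) := by
  let T : Set ℝ := {s | c ≤ μ (Set.Iic s)}
  have hb : b ∈ T := hc.trans_eq <| measure_congr <| eventuallyEq_set.2 <|
    hab.mono fun x hx ↦ by simp [hx.2]
  have ha : a ∈ lowerBounds T := fun s hs ↦ by
    by_contra! hsa
    have hzero : μ (Set.Iic s) = 0 := measure_eq_zero_iff_ae_notMem.2 <|
      hab.mono fun x hx hxs ↦ (hx.1.trans hxs).not_gt hsa
    exact (hc₀.trans_le hs).ne' hzero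
  refine ⟨sInf T, ⟨le_csInf ⟨b, hb⟩ ha, csInf_le ⟨a, ha⟩ hb⟩, ?_, ?_⟩
  · obtain ⟨u, hu, hlt, hlim⟩ := exists_seq_strictMono_tendsto (sInf T)
    rw [← iUnion_Iic_eq_Iio_of_lt_of_tendsto hlt hlim,
      Monotone.measure_iUnion fun _ _ h ↦ Set.Iic_subset_Iic.2 (hu.monotone h)]
    exact iSup_le fun n ↦ (not_le.1 fun h ↦ (hlt n).not_ge (csInf_le ⟨a, ha⟩ h)).le
  · have hright := tendsto_measure_biInter_gt (μ := μ) (s := Set.Iic) (a := sInf T)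
      (fun _ _ ↦ measurableSet_Iic.nullMeasurableSet) (fun _ _ _ h ↦ Set.Iic_subset_Iic.2 h)
      ⟨sInf T + 1, by simp, measure_ne_top _ _⟩
    have hinter : ⋂ r > sInf T, Set.Iic r = Set.Iic (sInf T) := by
      ext x
      simp [forall_gt_imp_ge_iff_le_of_dense]
    rw [hinter] at hright
    refine ge_of_tendsto hright (eventually_mem_nhdsWithin.mono fun r hr ↦ ?_)
    obtain ⟨s, hs, hsr⟩ := exists_lt_of_csInf_lt ⟨b, hb⟩ hr
    exact le_trans hs (measure_mono (Set.Iic_subset_Iic.2 hsr.le))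

lemma exists_add_mul_eq_of_le_of_le_add {p q c : ℝ≥0∞} (hq : q ≠ ∞) (hpc : p ≤ c)
    (hcq : c ≤ p + q) : ∃ θ ≤ 1, p + θ * q = c := by
  obtain rfl | hq₀ := eq_or_ne q 0
  · exact ⟨0, zero_le_one, by simpa using hpc.antisymm (by simpa using hcq)⟩
  · exact ⟨(c - p) / q, ENNReal.div_le_of_le_mul (by simpa [add_comm] using hcq),
      by rw [ENNReal.div_mul_cancel hq₀ hq, add_tsub_cancel_of_le hpc]⟩

variable {X : Type*} [MeasurableSpace X] {μ : Measure X} {f : X → ℝ}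

lemma restrict_lt_add_restrict_eq_add_restrict_gt (hf : Measurable f) (t : ℝ) :
    μ.restrict {x | f x < t} + μ.restrict {x | f x = t} + μ.restrict {x | t < f x} = μ := by
  have hle : {x | f x < t} ∪ {x | f x = t} = {x | f x ≤ t} := by
    ext x
    simp [le_iff_lt_or_eq]
  rw [← Measure.restrict_union _ (measurableSet_eq_fun hf measurable_const), hle,
    show {x | t < f x} = {x | f x ≤ t}ᶜ by ext; simp,
    Measure.restrict_add_restrict_compl (measurableSet_le hf measurable_const)]
  exact Set.disjoint_left.2 fun x hlt heq ↦ hlt.ne heq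

-- An atom of the distribution of `f` at the quantile has to be shared between the two parts.
lemma exists_quantile_cut [IsFiniteMeasure μ] (hf : Measurable f) {a b : ℝ}
    (hab : ∀ᵐ x ∂μ, f x ∈ Set.Icc a b) {c : ℝ≥0∞} (hc₀ : 0 < c) (hc : c ≤ μ Set.univ) :
    ∃ t ∈ Set.Icc a b, ∃ μ₁ μ₂ : Measure X, μ₁ + μ₂ = μ ∧ μ₁ Set.univ = c ∧
      (∀ᵐ x ∂μ₁, f x ≤ t) ∧ ∀ᵐ x ∂μ₂, t ≤ f x := by
  obtain ⟨t, ht, hIio, hIic⟩ := exists_measure_Iio_le_and_le_measure_Iic (μ := μ.map f)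
    ((ae_map_iff hf.aemeasurable measurableSet_Icc).2 hab) hc₀
    (by rwa [Measure.map_apply hf .univ, Set.preimage_univ])
  rw [Measure.map_apply hf measurableSet_Iio] at hIio
  rw [Measure.map_apply hf measurableSet_Iic] at hIic
  have hle : μ (f ⁻¹' Set.Iic t) ≤ μ {x | f x < t} + μ {x | f x = t} :=
    (measure_mono fun x (hx : f x ≤ t) ↦ hx.lt_or_eq).trans (measure_union_le _ _)
  obtain ⟨θ, hθ, hmass⟩ := exists_add_mul_eq_of_le_of_le_add (measure_ne_top _ _) hIio
    (hIic.trans hle)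
  refine ⟨t, ht, μ.restrict {x | f x < t} + θ • μ.restrict {x | f x = t},
    (1 - θ) • μ.restrict {x | f x = t} + μ.restrict {x | t < f x}, ?_, ?_, ?_, ?_⟩
  · conv_rhs => rw [← restrict_lt_add_restrict_eq_add_restrict_gt (μ := μ) hf t]
    rw [add_assoc, ← add_assoc (θ • _), ← add_smul, add_tsub_cancel_of_le hθ, one_smul, ← add_assoc]
  · simpa [Set.preimage] using hmass
  · exact ae_add_measure_iff.2 ⟨ae_restrict_of_forall_mem (measurableSet_lt hf measurable_const)
      fun x hx ↦ le_of_lt hx, Measure.ae_smul_measure (ae_restrict_of_forall_mem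
        (measurableSet_eq_fun hf measurable_const) fun x hx ↦ le_of_eq hx) _⟩
  · exact ae_add_measure_iff.2 ⟨Measure.ae_smul_measure (ae_restrict_of_forall_mem
      (measurableSet_eq_fun hf measurable_const) fun x hx ↦ ge_of_eq hx) _,
      ae_restrict_of_forall_mem (measurableSet_lt measurable_const hf) fun x hx ↦ le_of_lt hx⟩

end QuantileCut

section Splitting

variable {X : Type*} [MeasurableSpace X]

/-- The measure `μ` is a sum of `n` probability measures whose essential `δ`-diameters add up to at
most `B`: a substitute for an equal-mass partition of `μ` into `n` small cells, except that the
cells may overlap. -/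
def IsSplittable (δ : X → X → ℝ) (μ : Measure X) (n : ℕ) (B : ℝ) : Prop :=
  ∃ (ν : Fin n → Measure X) (D : Fin n → ℝ), (∀ i, IsProbabilityMeasure (ν i)) ∧ ∑ i, ν i = μ ∧
    ∑ i, D i ≤ B ∧ ∀ i, ∀ᵐ x ∂ν i, ∀ᵐ y ∂ν i, δ x y ≤ D i

variable {δ : X → X → ℝ} {μ μ' : Measure X} {n n' : ℕ} {B B' : ℝ}

lemma ae_of_sum_eq {ι : Type*} [Fintype ι] {ν : ι → Measure X} (h : ∑ i, ν i = μ) {p : X → Prop}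
    (hp : ∀ᵐ x ∂μ, p x) (i : ι) : ∀ᵐ x ∂ν i, p x :=
  (Measure.absolutelyContinuous_of_le <| h ▸ Finset.single_le_sum (f := ν)
    (fun _ _ ↦ Measure.zero_le _) (Finset.mem_univ i)).ae_le hp

lemma isSplittable_zero_measure (hB : 0 ≤ B) : IsSplittable δ (0 : Measure X) 0 B :=
  ⟨Fin.elim0, Fin.elim0, fun i ↦ i.elim0, by simp, by simpa using hB, fun i ↦ i.elim0⟩

lemma isSplittable_zero_dist (hμ : μ Set.univ = n) (hn : n ≤ 1) :
    IsSplittable (fun _ _ ↦ 0) μ n 0 := by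
  obtain rfl | rfl : n = 0 ∨ n = 1 := by lia
  · obtain rfl : μ = 0 := by simpa using hμ
    exact isSplittable_zero_measure le_rfl
  · exact ⟨fun _ ↦ μ, fun _ ↦ 0, fun _ ↦ ⟨by simpa using hμ⟩, by simp, by simp, by simp⟩

namespace IsSplittable

lemma mono (h : IsSplittable δ μ n B) (hB : B ≤ B') : IsSplittable δ μ n B' := by
  obtain ⟨ν, D, hprob, hsum, hD, hδ⟩ := h
  exact ⟨ν, D, hprob, hsum, hD.trans hB, hδ⟩

lemma append (h : IsSplittable δ μ n B) (h' : IsSplittable δ μ' n' B') :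
    IsSplittable δ (μ + μ') (n + n') (B + B') := by
  obtain ⟨ν, D, hprob, hsum, hD, hδ⟩ := h
  obtain ⟨ν', D', hprob', hsum', hD', hδ'⟩ := h'
  refine ⟨Fin.append ν ν', Fin.append D D', ?_, ?_, ?_, ?_⟩
  · simpa [Fin.forall_fin_add] using ⟨hprob, hprob'⟩
  · simp [Fin.sum_univ_add, hsum, hsum']
  · simpa [Fin.sum_univ_add] using add_le_add hD hD'
  · simpa only [Fin.forall_fin_add, Fin.append_left, Fin.append_right] using ⟨hδ, hδ'⟩

lemma of_le_mul {δ' : X → X → ℝ} (h : IsSplittable δ μ n B) {c : ℝ} (hc : 0 ≤ c)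
    (hδ' : ∀ᵐ x ∂μ, ∀ᵐ y ∂μ, δ' x y ≤ c * δ x y) : IsSplittable δ' μ n (c * B) := by
  obtain ⟨ν, D, hprob, hsum, hD, hδ⟩ := h
  refine ⟨ν, fun i ↦ c * D i, hprob, hsum, ?_, fun i ↦ ?_⟩
  · rw [← Finset.mul_sum]
    gcongr
  · filter_upwards [hδ i, ae_of_sum_eq hsum hδ' i] with x hx hx'
    filter_upwards [hx, ae_of_sum_eq hsum hx' i] with y hy hy'
    exact hy'.trans (by gcongr)

lemma add_dist {f : X → ℝ} {a b : ℝ} (h : IsSplittable δ μ n B)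
    (hf : ∀ᵐ x ∂μ, f x ∈ Set.Icc a b) :
    IsSplittable (fun x y ↦ dist (f x) (f y) + δ x y) μ n (n * (b - a) + B) := by
  obtain ⟨ν, D, hprob, hsum, hD, hδ⟩ := h
  refine ⟨ν, fun i ↦ b - a + D i, hprob, hsum, ?_, fun i ↦ ?_⟩
  · simpa [Finset.sum_add_distrib, mul_sub] using hD
  · filter_upwards [hδ i, ae_of_sum_eq hsum hf i] with x hx hfx
    filter_upwards [hx, ae_of_sum_eq hsum hf i] with y hy hfy
    exact add_le_add (Real.dist_le_of_mem_Icc hfx hfy) hy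

end IsSplittable

-- Cutting along quantiles of `f` gives slabs of mass at most `k`, whose widths add up to `b - a`.
lemma isSplittable_dist_add_of_slabs {f : X → ℝ} (hf : Measurable f) {k : ℕ} (hk : 0 < k)
    (hB : 0 ≤ B) (q : ℕ) {a b : ℝ} (hab : a ≤ b) (hfμ : ∀ᵐ x ∂μ, f x ∈ Set.Icc a b)
    (hμ : μ Set.univ = n) (hn : n ≤ q * k)
    (hsplit : ∀ μ' ≤ μ, ∀ n' : ℕ, n' ≤ k → μ' Set.univ = n' → IsSplittable δ μ' n' B) :
    IsSplittable (fun x y ↦ dist (f x) (f y) + δ x y) μ n (k * (b - a) + q * B) := by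
  have hwidth := sub_nonneg.2 hab
  induction q generalizing μ n a with
  | zero =>
    obtain rfl : n = 0 := by simpa using hn
    obtain rfl : μ = 0 := by simpa using hμ
    exact isSplittable_zero_measure (by positivity)
  | succ q ih =>
    rcases le_total n k with hnk | hkn
    · refine ((hsplit μ le_rfl n hnk hμ).add_dist hfμ).mono ?_
      gcongr
      exact le_mul_of_one_le_left hB (by simp)
    · have : IsFiniteMeasure μ := ⟨hμ ▸ ENNReal.natCast_lt_top n⟩
      obtain ⟨t, ht, μ₁, μ₂, rfl, hμ₁, hle, hge⟩ := exists_quantile_cut hf hfμ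
        (c := k) (by simpa) (by simpa [hμ])
      obtain ⟨hfμ₁, hfμ₂⟩ := ae_add_measure_iff.1 hfμ
      obtain ⟨r, rfl⟩ := Nat.exists_eq_add_of_le hkn
      have hμ₂ : μ₂ Set.univ = r := by
        simpa [hμ₁, ENNReal.add_right_inj (ENNReal.natCast_ne_top k)] using hμ
      have h₁ := (hsplit μ₁ (le_add_of_nonneg_right (Measure.zero_le _)) k le_rfl hμ₁).add_dist
        (f := f) (a := a) (b := t)
        (by filter_upwards [hfμ₁, hle] with x hx hxt using ⟨hx.1, hxt⟩)
      have h₂ := ih ht.2 (by filter_upwards [hfμ₂, hge] with x hx hxt using ⟨hxt, hx.2⟩) hμ₂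
        (by lia) (fun μ' h ↦ hsplit μ' (h.trans (le_add_of_nonneg_left (Measure.zero_le _))))
        (sub_nonneg.2 ht.2)
      refine (h₁.append h₂).mono (le_of_eq ?_)
      push_cast
      ring

lemma isSplittable_sum_dist {ι : Type*} {f : ι → X → ℝ} (hf : ∀ i, Measurable (f i))
    {m : ℕ} (hm : 0 < m) {a b : ℝ} (hab : a ≤ b) (s : Finset ι)
    (hfμ : ∀ i ∈ s, ∀ᵐ x ∂μ, f i x ∈ Set.Icc a b) (hμ : μ Set.univ = n) (hn : n ≤ m ^ s.card) :
    IsSplittable (fun x y ↦ ∑ i ∈ s, dist (f i x) (f i y)) μ n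
      (s.card * (b - a) * m ^ s.card / m) := by
  classical
  have := sub_nonneg.2 hab
  induction s using Finset.induction_on generalizing μ n with
  | empty => simpa using isSplittable_zero_dist hμ (by simpa using hn)
  | insert i s hi ih =>
    rw [Finset.card_insert_of_notMem hi] at hn ⊢
    simp only [Finset.sum_insert hi]
    refine (isSplittable_dist_add_of_slabs (hf i) (pow_pos hm s.card) (by positivity) m hab
      (hfμ i (Finset.mem_insert_self i s)) hμ (by rwa [pow_succ'] at hn) fun μ' hle n' hn' hμ' ↦
      ih (fun j hj ↦ (Measure.absolutelyContinuous_of_le hle).ae_le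
        (hfμ j (Finset.mem_insert_of_mem hj))) hμ' hn').mono (le_of_eq ?_)
    push_cast
    field_simp
    ring

end Splitting

/-! ## Upper bound for the energy gap -/

section UpperBound

lemma map_eval_pair_pi {ι X : Type*} [Fintype ι] [MeasurableSpace X] (ν : ι → Measure X)
    [∀ i, IsProbabilityMeasure (ν i)] {i j : ι} (hij : i ≠ j) :
    (Measure.pi ν).map (fun x ↦ (x i, x j)) = (ν i).prod (ν j) := by
  have hindep : ProbabilityTheory.IndepFun (fun x : ι → X ↦ x i) (fun x ↦ x j) (Measure.pi ν) :=
    (ProbabilityTheory.iIndepFun_pi (X := fun _ ↦ id) fun _ ↦ aemeasurable_id).indepFun hij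
  rw [ProbabilityTheory.indepFun_iff_map_prod_eq_prod_map_map
    (measurable_pi_apply i).aemeasurable (measurable_pi_apply j).aemeasurable] at hindep
  simpa only [(measurePreserving_eval ν _).map_eq] using hindep

section RandomConfiguration

variable {V : Type*} [NormedAddCommGroup V] [InnerProductSpace ℝ V] [FiniteDimensional ℝ V]
  [MeasurableSpace V] [BorelSpace V] {N : ℕ} {ν : Fin N → Measure V}
  [∀ i, IsProbabilityMeasure (ν i)] {F : ℝ → ℝ}

lemma integrable_radial_eval_pi (hF : Continuous F) (hν : ∀ i, ∀ᵐ x ∂ν i, ‖x‖ = 1) (i j : Fin N) :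
    Integrable (fun x : Fin N → V ↦ F (dist (x i) (x j))) (Measure.pi ν) := by
  rcases eq_or_ne i j with rfl | hij
  · simp
  · have hint := integrable_radial hF (hν i) (hν j)
    rw [← map_eval_pair_pi ν hij] at hint
    exact hint.comp_measurable (by fun_prop)

lemma integral_radial_eval_pi (hF : Continuous F) {i j : Fin N} (hij : i ≠ j) :
    ∫ x, F (dist (x i) (x j)) ∂Measure.pi ν = ∫ p, F (dist p.1 p.2) ∂(ν i).prod (ν j) := by
  rw [← map_eval_pair_pi ν hij, integral_map (by fun_prop) (by fun_prop)]

lemma integral_radialEnergy_empiricalMeasure (hF : Continuous F) (hF₀ : F 0 = 0)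
    (hν : ∀ i, ∀ᵐ x ∂ν i, ‖x‖ = 1) :
    ∫ x, radialEnergy F (empiricalMeasure x) ∂Measure.pi ν =
      radialEnergy F ((N : ℝ≥0∞)⁻¹ • ∑ i, ν i) -
        (∑ i, ∫ p, F (dist p.1 p.2) ∂(ν i).prod (ν i)) / N ^ 2 := by
  have hpair : ∀ i j, ∫ x, F (dist (x i) (x j)) ∂Measure.pi ν =
      ∫ p, F (dist p.1 p.2) ∂(ν i).prod (ν j) -
        if i = j then ∫ p, F (dist p.1 p.2) ∂(ν i).prod (ν i) else 0 := fun i j ↦ by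
    rcases eq_or_ne i j with rfl | hij
    · simp [hF₀]
    · simp [hij, integral_radial_eval_pi hF hij]
  simp only [radialEnergy_empiricalMeasure]
  rw [integral_div, integral_finsetSum _ fun i _ ↦ integrable_finsetSum _ fun j _ ↦
    integrable_radial_eval_pi hF hν i j, radialEnergy_smul_sum _ fun i j ↦
    integrable_radial hF (hν i) (hν j)]
  simp only [integral_finsetSum _ fun j _ ↦ integrable_radial_eval_pi hF hν _ j, hpair,
    Finset.sum_sub_distrib, Finset.sum_ite_eq, Finset.mem_univ, if_true]
  simp [div_eq_inv_mul, mul_sub]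

lemma exists_radialEnergy_id_sub_empiricalMeasure_le {σ : Measure V} [NeZero N] {B : ℝ}
    (hσ : ∀ᵐ x ∂σ, ‖x‖ = 1) (h : IsSplittable dist ((N : ℝ≥0∞) • σ) N B) :
    ∃ x : Fin N → V, (∀ i, ‖x i‖ = 1) ∧
      radialEnergy id σ - radialEnergy id (empiricalMeasure x) ≤ B / N ^ 2 := by
  obtain ⟨ν, D, hprob, hsum, hD, hdist⟩ := h
  have hν : ∀ i, ∀ᵐ x ∂ν i, ‖x‖ = 1 := ae_of_sum_eq hsum (Measure.ae_smul_measure hσ _)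
  have hdiag : ∀ i, ∫ p, id (dist p.1 p.2) ∂(ν i).prod (ν i) ≤ D i := fun i ↦ by
    have hint := integrable_radial continuous_id (hν i) (hν i)
    rw [integral_prod _ hint]
    have hinner : ∀ᵐ x ∂ν i, ∫ y, id (dist x y) ∂ν i ≤ D i := by
      filter_upwards [hdist i, hint.prod_right_ae] with x hx hintx
      simpa using integral_mono_ae hintx (integrable_const (D i)) hx
    simpa using integral_mono_ae hint.integral_prod_left (integrable_const (D i)) hinner
  have hσ_eq : (N : ℝ≥0∞)⁻¹ • ∑ i, ν i = σ := by
    rw [hsum, smul_smul, ENNReal.inv_mul_cancel (NeZero.ne _) (ENNReal.natCast_ne_top N), one_smul]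
  have hmean := integral_radialEnergy_empiricalMeasure continuous_id rfl hν
  have hint : Integrable (fun x : Fin N → V ↦ radialEnergy id (empiricalMeasure x))
      (Measure.pi ν) := by
    simp only [radialEnergy_empiricalMeasure]
    exact (integrable_finsetSum _ fun i _ ↦ integrable_finsetSum _ fun j _ ↦
      integrable_radial_eval_pi continuous_id hν i j).div_const _
  obtain ⟨x, hx, hle⟩ := exists_notMem_null_integral_le hint <| ae_iff.1 <| ae_all_iff.2 fun i ↦
    (Measure.tendsto_eval_ae_ae (μ := ν) (i := i)).eventually (hν i)
  refine ⟨x, by simpa using hx, ?_⟩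
  rw [hmean, hσ_eq] at hle
  calc _ ≤ (∑ i, ∫ p, id (dist p.1 p.2) ∂(ν i).prod (ν i)) / N ^ 2 := by linarith
    _ ≤ B / N ^ 2 := by
      gcongr
      exact (Finset.sum_le_sum fun i _ ↦ hdiag i).trans hD

end RandomConfiguration

lemma dist_le_sum_dist {ι : Type*} [Fintype ι] (x y : EuclideanSpace ℝ ι) :
    dist x y ≤ ∑ i, dist (x i) (y i) := by
  rw [EuclideanSpace.dist_eq, Real.sqrt_le_left (by positivity)]
  exact Finset.sum_sq_le_sq_sum_of_nonneg fun i _ ↦ dist_nonneg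

lemma isSplittable_dist_of_ae_norm_eq_one {d : ℕ} [NeZero d]
    {μ : Measure (EuclideanSpace ℝ (Fin (d + 1)))} (hμ : ∀ᵐ x ∂μ, ‖x‖ = 1) {n m : ℕ} (hm : 0 < m)
    (hmass : μ Set.univ = n) (hn : n ≤ m ^ d) :
    IsSplittable dist μ n (16 * d * m ^ d / m) := by
  have hcoord : ∀ i ∈ Finset.univ, ∀ᵐ x ∂μ, sphereChart (d := d) x i ∈ Set.Icc (-4 : ℝ) 4 :=
    fun i _ ↦ hμ.mono fun x hx ↦ abs_le.1 <|
      (PiLp.norm_apply_le (sphereChart x) i).trans (norm_sphereChart_le hx)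
  have hsplit := isSplittable_sum_dist (f := fun i x ↦ sphereChart (d := d) x i)
    (fun i ↦ by have := measurable_sphereChart (d := d); fun_prop) hm (by norm_num) Finset.univ
    hcoord hmass (by simpa using hn)
  refine (hsplit.of_le_mul zero_le_two ?_).mono (le_of_eq ?_)
  · filter_upwards [hμ] with x hx
    filter_upwards [hμ] with y hy
    exact (dist_le_two_mul_dist_sphereChart hx hy).trans
      (mul_le_mul_of_nonneg_left (dist_le_sum_dist _ _) zero_le_two)
  · simp
    ring

lemma exists_configuration_radialEnergy_id_sub_le {d : ℕ} [NeZero d]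
    {σ : Measure (EuclideanSpace ℝ (Fin (d + 1)))} [IsProbabilityMeasure σ]
    (hσ : ∀ᵐ x ∂σ, ‖x‖ = 1) (N : ℕ) [NeZero N] :
    ∃ x : Fin N → EuclideanSpace ℝ (Fin (d + 1)), (∀ i, ‖x i‖ = 1) ∧
      radialEnergy id σ - radialEnergy id (empiricalMeasure x) ≤
        16 * d * 2 ^ d * (N : ℝ) ^ (-1 - 1 / d : ℝ) := by
  have hd : (d : ℝ) ≠ 0 := NeZero.ne _
  have hN : (1 : ℝ) ≤ N := Nat.one_le_cast.2 NeZero.one_le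
  let r : ℝ := (N : ℝ) ^ (1 / d : ℝ)
  have hr : 1 ≤ r := Real.one_le_rpow hN (by positivity)
  have hrd : r ^ d = N := by
    rw [← Real.rpow_natCast, ← Real.rpow_mul (by positivity), one_div_mul_cancel hd, Real.rpow_one]
  have hrm : r ≤ ⌈r⌉₊ := Nat.le_ceil r
  have hmr : (⌈r⌉₊ : ℝ) ≤ 2 * r := by linarith [Nat.ceil_lt_add_one (zero_le_one.trans hr)]
  have hNm : N ≤ ⌈r⌉₊ ^ d := by
    have : (N : ℝ) ≤ ⌈r⌉₊ ^ d := hrd ▸ by gcongr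
    exact_mod_cast this
  obtain ⟨x, hx, hle⟩ := exists_radialEnergy_id_sub_empiricalMeasure_le hσ <|
    isSplittable_dist_of_ae_norm_eq_one (Measure.ae_smul_measure hσ (N : ℝ≥0∞))
      (Nat.ceil_pos.2 (by positivity)) (by simp) hNm
  refine ⟨x, hx, hle.trans ?_⟩
  calc 16 * d * (⌈r⌉₊ : ℝ) ^ d / ⌈r⌉₊ / N ^ 2 ≤ 16 * d * (2 * r) ^ d / r / N ^ 2 := by gcongr
    _ = 16 * d * 2 ^ d * (N : ℝ) ^ (-1 - 1 / d : ℝ) := by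
      rw [mul_pow, hrd, Real.rpow_sub (by positivity), Real.rpow_neg_one]
      change _ = 16 * d * 2 ^ d * ((N : ℝ)⁻¹ / r)
      field_simp

end UpperBound

/-! ## Order of the optimal discrepancy -/

section Discrepancy

variable {d N : ℕ}

lemma L2DiscSq_eq_stolarskyConst_mul [NeZero d] [NeZero N]
    {x : Fin N → EuclideanSpace ℝ (Fin (d + 1))} (hx : ∀ i, ‖x i‖ = 1) :
    L2DiscSq d N x = stolarskyConst (sigmaMeasure d) *
      (radialEnergy id (sigmaMeasure d) - radialEnergy id (empiricalMeasure x)) := by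
  have hcap : ∀ (t : ℝ) (y : EuclideanSpace ℝ (Fin (d + 1))),
      (Nat.card {k // t ≤ ⟪y, x k⟫} : ℝ) / N = (empiricalMeasure x).real {z | t ≤ ⟪y, z⟫} :=
    fun t y ↦ by
      have hmeas : MeasurableSet {z | t ≤ ⟪y, z⟫} := measurableSet_le (by fun_prop) (by fun_prop)
      rw [empiricalMeasure_real_apply x hmeas]
      simp only [Set.mem_ofPred_eq]
  simp only [L2DiscSq, hcap]
  exact stolarsky_invariance_principle (ae_empiricalMeasure hx)

lemma le_optL2Disc {b : ℝ} (h : ∀ x : Fin N → EuclideanSpace ℝ (Fin (d + 1)),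
    (∀ i, ‖x i‖ = 1) → b ≤ L2Disc d N x) : b ≤ optL2Disc d N :=
  have : Nonempty {x : Fin N → EuclideanSpace ℝ (Fin (d + 1)) // ∀ k, x k ∈ sphere 0 1} :=
    ⟨fun _ ↦ EuclideanSpace.single 0 1, fun _ ↦ by simp⟩
  le_ciInf fun x ↦ h x.1 fun i ↦ mem_sphere_zero_iff_norm.1 (x.2 i)

lemma optL2Disc_le {x : Fin N → EuclideanSpace ℝ (Fin (d + 1))} (hx : ∀ i, ‖x i‖ = 1) :
    optL2Disc d N ≤ L2Disc d N x := by
  have hbdd : BddBelow (Set.range fun x : {x : Fin N → EuclideanSpace ℝ (Fin (d + 1)) //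
      ∀ k, x k ∈ sphere 0 1} ↦ L2Disc d N x.1) :=
    ⟨0, Set.forall_mem_range.2 fun _ ↦ Real.sqrt_nonneg _⟩
  exact ciInf_le hbdd ⟨x, fun k ↦ mem_sphere_zero_iff_norm.2 (hx k)⟩

lemma rpow_discrepancy_exponent_eq_sqrt (hd : 0 < d) (N : ℕ) :
    (N : ℝ) ^ (-(1 : ℝ) / 2 - 1 / (2 * d)) = √((N : ℝ) ^ (-1 - 1 / d : ℝ)) := by
  rw [Real.sqrt_eq_rpow, ← Real.rpow_mul N.cast_nonneg]
  congr 1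
  field_simp

theorem optL2Disc_asymptotic_order_general (d : ℕ) (hd : 0 < d) :
    ∃ c' C' : ℝ, 0 < c' ∧ 0 < C' ∧ ∀ N : ℕ, 0 < N →
      c' * (N : ℝ) ^ (-(1 : ℝ) / 2 - 1 / (2 * d)) ≤ optL2Disc d N ∧
      optL2Disc d N ≤ C' * (N : ℝ) ^ (-(1 : ℝ) / 2 - 1 / (2 * d)) := by
  have : NeZero d := ⟨hd.ne'⟩
  let κ := stolarskyConst (sigmaMeasure d)
  have hκ : 0 < κ := stolarskyConst_pos
  obtain ⟨c, hc, hlower⟩ := exists_le_radialEnergy_id_sub_empiricalMeasure hd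
  refine ⟨√(κ * c), √(κ * (16 * d * 2 ^ d)), by positivity, by positivity, fun N hN ↦ ?_⟩
  have : NeZero N := ⟨hN.ne'⟩
  rw [rpow_discrepancy_exponent_eq_sqrt hd, ← Real.sqrt_mul (by positivity),
    ← Real.sqrt_mul (by positivity), mul_assoc, mul_assoc κ]
  constructor
  · refine le_optL2Disc fun x hx ↦ Real.sqrt_le_sqrt ?_
    rw [L2DiscSq_eq_stolarskyConst_mul hx]
    exact mul_le_mul_of_nonneg_left (hlower (sigmaMeasure d) N x hx) hκ.le
  · obtain ⟨x, hx, hupper⟩ := exists_configuration_radialEnergy_id_sub_le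
      (IsUniformOnSphere.ae_norm_eq_one (σ := sigmaMeasure d)) N
    refine (optL2Disc_le hx).trans (Real.sqrt_le_sqrt ?_)
    rw [L2DiscSq_eq_stolarskyConst_mul hx]
    exact mul_le_mul_of_nonneg_left hupper hκ.le

end Discrepancy

/-- For `d ≥ 2` there are constants `c′, C′ > 0` such that for all sufficiently large `N`,
`c′ · N^{−1/2 − 1/(2d)} ≤ D_{L2,C}(S^d; N) ≤ C′ · N^{−1/2 − 1/(2d)}`. -/
theorem optL2Disc_asymptotic_order (d : ℕ) (hd : 2 ≤ d) :
    ∃ c' C' : ℝ, 0 < c' ∧ 0 < C' ∧ ∀ᶠ N : ℕ in atTop,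
      c' * (N : ℝ) ^ (-(1 : ℝ) / 2 - 1 / (2 * d)) ≤ optL2Disc d N ∧
      optL2Disc d N ≤ C' * (N : ℝ) ^ (-(1 : ℝ) / 2 - 1 / (2 * d)) := by
  obtain ⟨c', C', hc', hC', h⟩ := optL2Disc_asymptotic_order_general d (by lia)
  exact ⟨c', C', hc', hC', (eventually_gt_atTop 0).mono h⟩
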